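/- Assume the Riemann Hypothesis and let 0 < B₁ ≤ B₂ < B₃ < 1 and c > 0. Suppose there are constants D and X₀ such that |Ṽ(X, h) − h·X·(log(X/h) − γ₀ − log 2π)| ≤ D·h·X^{1−c} for all X ≥ X₀ and all h with X^{1−B₃} ≤ h ≤ X^{1−B₁}. Then for every ε > 0 there exist constants C > 0 and X₁ such that for all X ≥ X₁ and all δ with X^{−B₂} ≤ δ ≤ X^{−B₁}: |V(X, δ) − (1/2)·δ·X²·(log(1/δ) + 1 − γ₀ − log 2π)| ≤ C·(δ^{1−ε}·X^{2−c/3} + δ^{1−ε}·X²·(δ·X^{B₃})^{−2/(3B₃)}). -/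

import Mathlib

open Real MeasureTheory

/-- The Chebyshev function `ψ(x) = ∑_{n ≤ x} Λ(n)`. -/
noncomputable def chebyshevPsi (x : ℝ) : ℝ :=
  ∑ n ∈ Finset.range (⌊x⌋₊ + 1), ArithmeticFunction.vonMangoldt n

/-- The variance `V(X,δ) = ∫_1^X (ψ(x+δx) - ψ(x) - δx)² dx`. -/
noncomputable def zetaVarDelta (X δ : ℝ) : ℝ :=
  ∫ x in (1:ℝ)..X, (chebyshevPsi (x + δ * x) - chebyshevPsi x - δ * x) ^ 2

/-- The variance `Ṽ(X,h) = ∫_1^X (ψ(x+h) - ψ(x) - h)² dx`. -/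
noncomputable def zetaVarH (X h : ℝ) : ℝ :=
  ∫ x in (1:ℝ)..X, (chebyshevPsi (x + h) - chebyshevPsi x - h) ^ 2

/-!
Under the Riemann Hypothesis, `ζ'/ζ` grows slower than any power of `|t|` on the line
`Re s = 1/2 + ε`, apart from the pole at `s = 1`. Plancherel's theorem on that line for the Laplace
transform of `ψ(eᵘ) - eᵘ` yields the Saffari–Vaughan bound
`∫₁ˣ (ψ(t + θt) - ψ(t) - θt)² dt ≪ X^(2 + 2ε) θ^(1 - ε)`.

To pass from `Ṽ` to `V`, average `V(X, d)` over `(1 - η)δ ≤ d ≤ δ` with respect to `dd / d`.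
Substituting `h = d x` and exchanging the integrals turns the average into an integral of `Ṽ(·, h)`
over `h`, which the hypothesis evaluates. The averaging costs a factor `1 / η` in the error; it is
removed by the Saffari–Vaughan bound, because the increments of `ψ` over `(x, x + dx]` and
`(x, x + δx]` differ by an increment of relative length at most `ηδ`. The choice `η = X^(-2c/3)`
balances the two errors. The hypothesis covers only `x ≥ Y = (δ/2)^(-1/B₃)`; below `Y` the
Saffari–Vaughan bound alone suffices.
-/

section ZetaRightHalfPlane

open Complex Set Filter Topology MeasureTheory

/-- The fractional part restricted to `(1, ∞)`. Its Mellin transform continues `ζ` to `0 < re s`. -/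
noncomputable def fractTail : ℝ → ℂ := (Ioi (1 : ℝ)).indicator fun t ↦ ((Int.fract t : ℝ) : ℂ)

lemma norm_ofReal_fract_le_one (t : ℝ) : ‖((Int.fract t : ℝ) : ℂ)‖ ≤ 1 := by
  rw [norm_real, Real.norm_of_nonneg (Int.fract_nonneg t)]
  exact (Int.fract_lt_one t).le

lemma norm_fractTail_le_one (t : ℝ) : ‖fractTail t‖ ≤ 1 :=
  (norm_indicator_le_norm_self _ t).trans (norm_ofReal_fract_le_one t)

lemma fractTail_of_le_one {t : ℝ} (ht : t ≤ 1) : fractTail t = 0 :=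
  indicator_of_notMem (notMem_Ioi.mpr ht) _

lemma measurable_fractTail : Measurable fractTail :=
  (measurable_ofReal.comp measurable_fract).indicator measurableSet_Ioi

lemma locallyIntegrable_fractTail : LocallyIntegrable fractTail :=
  (locallyIntegrable_const (1 : ℝ)).mono measurable_fractTail.aestronglyMeasurable
    (.of_forall fun t ↦ by simpa using norm_fractTail_le_one t)

lemma differentiableAt_mellin_fractTail {s : ℂ} (hs : s.re < 0) :
    DifferentiableAt ℂ (mellin fractTail) s := by
  refine mellin_differentiableAt_of_isBigO_rpow (a := 0) (b := s.re - 1)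
    (locallyIntegrable_fractTail.locallyIntegrableOn _) ?_ hs ?_ (by linarith)
  · exact .of_bound 1 (.of_forall fun t ↦ by simpa using norm_fractTail_le_one t)
  · refine .of_bound 1 ?_
    filter_upwards [eventually_nhdsWithin_of_eventually_nhds (eventually_le_nhds one_pos)] with t ht
    simp [fractTail_of_le_one ht]

lemma mellin_fractTail (s : ℂ) :
    mellin fractTail s = ∫ t in Ioi (1 : ℝ), ((Int.fract t : ℝ) : ℂ) * (t : ℂ) ^ (s - 1) := by
  have hind (t : ℝ) : (t : ℂ) ^ (s - 1) • fractTail t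
      = (Ioi (1 : ℝ)).indicator (fun t : ℝ ↦ ((Int.fract t : ℝ) : ℂ) * (t : ℂ) ^ (s - 1)) t := by
    rw [indicator_mul_left, smul_eq_mul, mul_comm, fractTail]
  simp_rw [mellin, hind]
  rw [setIntegral_indicator measurableSet_Ioi,
    inter_eq_right.mpr (Ioi_subset_Ioi zero_le_one)]

lemma norm_fract_mul_cpow_le {t : ℝ} (ht : 0 < t) (s : ℂ) :
    ‖((Int.fract t : ℝ) : ℂ) * (t : ℂ) ^ s‖ ≤ t ^ s.re := by
  rw [norm_mul, norm_cpow_eq_rpow_re_of_pos ht]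
  exact mul_le_of_le_one_left (by positivity) (norm_ofReal_fract_le_one t)

lemma integrableOn_fract_mul_cpow {s : ℂ} (hs : s.re < -1) :
    IntegrableOn (fun t : ℝ ↦ ((Int.fract t : ℝ) : ℂ) * (t : ℂ) ^ s) (Ioi 1) := by
  refine Integrable.mono' (integrableOn_Ioi_rpow_of_lt hs one_pos) ?_ ?_
  · exact ((measurable_ofReal.comp measurable_fract).mul (by fun_prop)).aestronglyMeasurable
  · filter_upwards [ae_restrict_mem measurableSet_Ioi] with t ht
    exact norm_fract_mul_cpow_le (one_pos.trans ht) s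

lemma norm_mellin_fractTail_le {s : ℂ} (hs : s.re < 0) : ‖mellin fractTail s‖ ≤ -1 / s.re := by
  have hre : (s - 1).re = s.re - 1 := by simp
  rw [mellin_fractTail]
  calc
    _ ≤ ∫ t in Ioi (1 : ℝ), t ^ (s - 1).re := by
      refine norm_integral_le_of_norm_le (integrableOn_Ioi_rpow_of_lt (by linarith) one_pos) ?_
      filter_upwards [ae_restrict_mem measurableSet_Ioi] with t ht
      exact norm_fract_mul_cpow_le (one_pos.trans ht) _
    _ = -1 / s.re := by
      rw [integral_Ioi_rpow_of_lt (by linarith) one_pos, hre, one_rpow, sub_add_cancel]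

lemma riemannZeta₁_eq_sub_one_mul {s : ℂ} (hs : s ≠ 1) :
    riemannZeta₁ s = (s - 1) * riemannZeta s := by
  rw [riemannZeta_eq_inv_sub_mul hs, mul_inv_cancel_left₀ (sub_ne_zero.mpr hs)]

lemma riemannZeta_eq_mul_integral_floor {s : ℂ} (hs : 1 < s.re) :
    riemannZeta s = s * ∫ t in Ioi (1 : ℝ), (⌊t⌋₊ : ℂ) * (t : ℂ) ^ (-(s + 1)) := by
  rw [← LSeries_one_eq_riemannZeta hs, LSeries_eq_mul_integral (f := 1) zero_le_one hs
    (LSeriesSummable_one_iff.mpr hs)]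
  · simp
  · exact .of_bound 1 (.of_forall fun n ↦ by simp)

lemma integral_floor_mul_cpow {s : ℂ} (hs : 1 < s.re) :
    ∫ t in Ioi (1 : ℝ), (⌊t⌋₊ : ℂ) * (t : ℂ) ^ (-(s + 1))
      = 1 / (s - 1) - mellin fractTail (-s) := by
  have hpole : ∫ t in Ioi (1 : ℝ), (t : ℂ) ^ (-s) = 1 / (s - 1) := by
    rw [integral_Ioi_cpow_of_lt (by simpa using hs) one_pos, ofReal_one, one_cpow,
      show -s + 1 = -(s - 1) by ring, neg_div_neg_eq]
  rw [mellin_fractTail, ← hpole, ← integral_sub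
    (integrableOn_Ioi_cpow_of_lt (by simpa using hs) one_pos)
    (integrableOn_fract_mul_cpow (by simp; linarith))]
  refine setIntegral_congr_fun measurableSet_Ioi fun t ht ↦ ?_
  have ht0 : (0 : ℝ) < t := one_pos.trans ht
  have hpow : (t : ℂ) ^ (-s) = t * (t : ℂ) ^ (-(s + 1)) := by
    rw [show -s = 1 + -(s + 1) by ring, cpow_add _ _ (ofReal_ne_zero.mpr ht0.ne'), cpow_one]
  have hfloor : (⌊t⌋₊ : ℂ) = t - ((Int.fract t : ℝ) : ℂ) := by
    have : (⌊t⌋₊ : ℝ) = t - Int.fract t := by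
      rw [natCast_floor_eq_intCast_floor ht0.le, Int.self_sub_fract]
    exact_mod_cast this
  simp only [hpow, hfloor, neg_add']
  ring

lemma riemannZeta₁_eq_of_one_lt_re {s : ℂ} (hs : 1 < s.re) :
    riemannZeta₁ s = s - s * (s - 1) * mellin fractTail (-s) := by
  have hs1 : s ≠ 1 := by rintro rfl; simp at hs
  have hs1' : s - 1 ≠ 0 := sub_ne_zero.mpr hs1
  rw [riemannZeta₁_eq_sub_one_mul hs1, riemannZeta_eq_mul_integral_floor hs,
    integral_floor_mul_cpow hs]
  field_simp

lemma riemannZeta₁_eq_of_re_pos {s : ℂ} (hs : 0 < s.re) :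
    riemannZeta₁ s = s - s * (s - 1) * mellin fractTail (-s) := by
  have hopen (a : ℝ) : IsOpen {s : ℂ | a < s.re} := isOpen_lt continuous_const continuous_re
  have hzeta : AnalyticOnNhd ℂ riemannZeta₁ {s : ℂ | 0 < s.re} :=
    differentiable_riemannZeta₁.differentiableOn.analyticOnNhd (hopen 0)
  have hmellin : AnalyticOnNhd ℂ (fun s ↦ s - s * (s - 1) * mellin fractTail (-s))
      {s : ℂ | 0 < s.re} := by
    refine DifferentiableOn.analyticOnNhd (fun z hz ↦ ?_) (hopen 0)
    have : DifferentiableAt ℂ (fun s ↦ mellin fractTail (-s)) z :=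
      (differentiableAt_mellin_fractTail (by simpa using hz)).comp z differentiableAt_id.neg
    exact DifferentiableAt.differentiableWithinAt (by fun_prop)
  refine hzeta.eqOn_of_preconnected_of_eventuallyEq hmellin
    (convex_halfSpace_re_gt 0).isPreconnected (z₀ := 2) (by simp) ?_ hs
  filter_upwards [(hopen 1).mem_nhds (by simp : (2 : ℂ) ∈ {s : ℂ | 1 < s.re})] with z hz
  exact riemannZeta₁_eq_of_one_lt_re hz

lemma norm_riemannZeta₁_le {s : ℂ} (hs : 1 / 2 ≤ s.re) :
    ‖riemannZeta₁ s‖ ≤ 3 * (1 + ‖s‖) ^ 2 := by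
  have hmellin : ‖mellin fractTail (-s)‖ ≤ 2 := by
    refine (norm_mellin_fractTail_le (by rw [neg_re]; linarith)).trans ?_
    rw [neg_re, neg_div_neg_eq, div_le_iff₀ (by linarith)]
    linarith
  rw [riemannZeta₁_eq_of_re_pos (by linarith)]
  calc
    _ ≤ ‖s‖ + ‖s‖ * ‖s - 1‖ * ‖mellin fractTail (-s)‖ := by
      rw [← norm_mul, ← norm_mul]
      exact norm_sub_le _ _
    _ ≤ ‖s‖ + ‖s‖ * (‖s‖ + 1) * 2 := by
      gcongr
      exact (norm_sub_le _ _).trans (by simp)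
    _ ≤ _ := by nlinarith [norm_nonneg s]

lemma riemannZeta₁_ne_zero_of_riemannHypothesis (hRH : RiemannHypothesis) {s : ℂ}
    (hs : 1 / 2 < s.re) : riemannZeta₁ s ≠ 0 := by
  obtain rfl | hs1 := eq_or_ne s 1
  · simp
  intro hzero
  have hre : s.re = 1 / 2 := by
    refine hRH s (by rw [riemannZeta_eq_inv_sub_mul hs1, hzero, mul_zero]) ?_ hs1
    rintro ⟨n, rfl⟩
    have : (0 : ℝ) ≤ n := n.cast_nonneg
    simp at hs
    linarith
  linarith

lemma norm_one_div_nat_add_one_cpow (n : ℕ) (s : ℂ) :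
    ‖1 / ((n : ℂ) + 1) ^ s‖ = 1 / ((n : ℝ) + 1) ^ s.re := by
  rw [norm_div, norm_one, show (n : ℂ) + 1 = ((n + 1 : ℝ) : ℂ) by push_cast; rfl,
    norm_cpow_eq_rpow_re_of_pos (by positivity)]

lemma norm_riemannZeta_sub_one_le {s : ℂ} (hs : s.re = 2) :
    ‖riemannZeta s - 1‖ ≤ π ^ 2 / 6 - 1 := by
  have hs1 : 1 < s.re := by rw [hs]; norm_num
  have hsummable : Summable fun n : ℕ ↦ 1 / ((n : ℂ) + 1) ^ s := by
    exact_mod_cast (summable_nat_add_iff 1).mpr (summable_one_div_nat_cpow.mpr hs1)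
  have hzeta_two : HasSum (fun n : ℕ ↦ 1 / (((n + 1 : ℕ) : ℝ) + 1) ^ 2) (π ^ 2 / 6 - 1) := by
    have := (hasSum_nat_add_iff' 2).mpr hasSum_zeta_two
    simp only [Finset.sum_range_succ, Finset.sum_range_zero] at this
    norm_num [add_assoc] at this ⊢
    exact this
  rw [zeta_eq_tsum_one_div_nat_add_one_cpow hs1, hsummable.tsum_eq_zero_add, Nat.cast_zero,
    zero_add, one_cpow, div_one, add_sub_cancel_left]
  refine tsum_of_norm_bounded hzeta_two fun n ↦ ?_
  rw [norm_one_div_nat_add_one_cpow, hs, Real.rpow_two]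

lemma le_norm_riemannZeta₁_of_re_eq_two {s : ℂ} (hs : s.re = 2) : 0.3 ≤ ‖riemannZeta₁ s‖ := by
  have hs1 : s ≠ 1 := by rintro rfl; norm_num at hs
  have hsub : 1 ≤ ‖s - 1‖ := by
    refine le_trans ?_ (abs_re_le_norm _)
    norm_num [hs]
  have hzeta : 0.3 ≤ ‖riemannZeta s‖ := by
    have hpi : π ^ 2 / 6 < 1.7 := by nlinarith [Real.pi_lt_d2, Real.pi_pos]
    have hone : ‖(1 : ℂ)‖ ≤ ‖riemannZeta s‖ + ‖riemannZeta s - 1‖ := by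
      simpa using norm_sub_le (riemannZeta s) (riemannZeta s - 1)
    rw [norm_one] at hone
    linarith [norm_riemannZeta_sub_one_le hs]
  rw [riemannZeta₁_eq_sub_one_mul hs1, norm_mul]
  nlinarith

end ZetaRightHalfPlane

section LogDerivBound

open Complex Set Metric

variable {f : ℂ → ℂ} {c : ℂ} {R : ℝ}

lemma exists_eq_mul_exp_on_ball (hR : 0 < R) (hf : DifferentiableOn ℂ f (ball c R))
    (hne : ∀ z ∈ ball c R, f z ≠ 0) :
    ∃ g : ℂ → ℂ, g c = 0 ∧ (∀ z ∈ ball c R, HasDerivAt g (logDeriv f z) z) ∧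
      ∀ z ∈ ball c R, f z = f c * exp (g z) := by
  obtain ⟨g, hgc, hg⟩ :=
    ((hf.deriv isOpen_ball).div hf hne).isExactOn_ball.with_val_at c 0
  have hgd : DifferentiableOn ℂ g (ball c R) :=
    fun z hz ↦ (hg z hz).differentiableAt.differentiableWithinAt
  have hlogDeriv : EqOn (logDeriv f) (logDeriv (exp ∘ g)) (ball c R) := fun z hz ↦ by
    rw [logDeriv_comp Complex.differentiableAt_exp (hg z hz).differentiableAt, (hg z hz).deriv,
      logDeriv_apply, logDeriv_apply, Complex.deriv_exp, div_self (Complex.exp_ne_zero _), one_mul]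
    rfl
  obtain ⟨a, -, ha⟩ := (logDeriv_eqOn_iff hf hgd.cexp isOpen_ball (convex_ball c R).isPreconnected
    (fun z _ ↦ exp_ne_zero _) hne).mp hlogDeriv
  have hac : f c = a := by simpa [hgc] using ha (mem_ball_self hR)
  exact ⟨g, hgc, hg, fun z hz ↦ by simpa [hac] using ha hz⟩

lemma norm_le_of_re_le_on_ball {g : ℂ → ℂ} {M : ℝ} (hM : 0 < M)
    (hg : DifferentiableOn ℂ g (ball c R)) (hgc : g c = 0) (hre : ∀ z ∈ ball c R, (g z).re ≤ M)
    {z : ℂ} (hz : z ∈ ball c R) : ‖g z‖ ≤ 2 * M * ‖z - c‖ / (R - ‖z - c‖) := by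
  have hshift : MapsTo (· + c) (ball (0 : ℂ) R) (ball c R) := fun w hw ↦ by simpa using hw
  have hz' : z - c ∈ ball (0 : ℂ) R := by simpa [dist_eq_norm] using hz
  simpa using borelCaratheodory_zero (f := fun w ↦ g (w + c)) hM
    (hg.comp (by fun_prop) hshift) (fun w hw ↦ hre _ (hshift hw))
    ((norm_nonneg _).trans_lt (mem_ball_zero_iff.mp hz')) hz' (by simpa using hgc)

lemma norm_logDeriv_le_of_norm_le_mul_exp {M η : ℝ} (hM : 0 < M) (hη : 0 < η)
    (hf : DifferentiableOn ℂ f (ball c R)) (hne : ∀ z ∈ ball c R, f z ≠ 0)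
    (hbound : ∀ z ∈ ball c R, ‖f z‖ ≤ ‖f c‖ * Real.exp M)
    {s : ℂ} (hs : ‖s - c‖ ≤ R - 2 * η) : ‖logDeriv f s‖ ≤ 2 * M * R / η ^ 2 := by
  have hR : 0 < R := by linarith [norm_nonneg (s - c)]
  have hnorm : ∀ z ∈ closedBall s η, ‖z - c‖ ≤ R - η := fun z hz ↦ by
    have : ‖z - s‖ ≤ η := by simpa [dist_eq_norm] using hz
    linarith [norm_sub_le_norm_sub_add_norm_sub z s c]
  have hsub : closedBall s η ⊆ ball c R := fun z hz ↦ by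
    rw [mem_ball, dist_eq_norm]
    linarith [hnorm z hz]
  obtain ⟨g, hgc, hg, hfg⟩ := exists_eq_mul_exp_on_ball hR hf hne
  have hgd : DifferentiableOn ℂ g (ball c R) :=
    fun z hz ↦ (hg z hz).differentiableAt.differentiableWithinAt
  have hre : ∀ z ∈ ball c R, (g z).re ≤ M := fun z hz ↦ by
    have hfc : 0 < ‖f c‖ := norm_pos_iff.mpr (hne c (mem_ball_self hR))
    have := hbound z hz
    rwa [hfg z hz, norm_mul, norm_exp, mul_le_mul_iff_right₀ hfc, Real.exp_le_exp] at this
  have hgle : ∀ z ∈ sphere s η, ‖g z‖ ≤ 2 * M * R / η := fun z hz ↦ by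
    have hz' := sphere_subset_closedBall hz
    refine (norm_le_of_re_le_on_ball hM hgd hgc hre (hsub hz')).trans ?_
    have := hnorm z hz'
    gcongr <;> linarith
  have hcauchy := norm_deriv_le_of_forall_mem_sphere_norm_le hη
    ((hgd.mono hsub).diffContOnCl_ball subset_rfl) hgle
  rwa [(hg s (hsub (mem_closedBall_self hη.le))).deriv, div_div, ← sq] at hcauchy

lemma norm_logDeriv_riemannZeta₁_le (hRH : RiemannHypothesis) {ε : ℝ} (hε : 0 < ε) {s : ℂ}
    (hs : 1 / 2 + ε ≤ s.re) (hs2 : s.re ≤ 2) :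
    ‖logDeriv riemannZeta₁ s‖ ≤ 48 / ε ^ 2 * Real.log (5 + |s.im|) := by
  set c : ℂ := ⟨2, s.im⟩
  have hre : ∀ z ∈ ball c (3 / 2), 1 / 2 < z.re := fun z hz ↦ by
    have h := (abs_re_le_norm (z - c)).trans_lt (mem_ball_iff_norm.mp hz)
    linarith [(abs_lt.mp h).1, show (z - c).re = z.re - 2 by simp [c]]
  have hbound : ∀ z ∈ ball c (3 / 2),
      ‖riemannZeta₁ z‖ ≤ ‖riemannZeta₁ c‖ * Real.exp (4 * Real.log (5 + |s.im|)) := fun z hz ↦ by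
    have hz' : ‖z‖ ≤ 7 / 2 + |s.im| := by
      have hc : ‖c‖ ≤ 2 + |s.im| := by simpa [c] using norm_le_abs_re_add_abs_im c
      linarith [norm_le_norm_add_norm_sub' z c, mem_ball_iff_norm.mp hz]
    have hexp : Real.exp (4 * Real.log (5 + |s.im|)) = (5 + |s.im|) ^ 4 := by
      rw [mul_comm, Real.exp_mul, Real.exp_log (by positivity)]
      norm_cast
    have hlower := le_norm_riemannZeta₁_of_re_eq_two (s := c) rfl
    calc
      _ ≤ 3 * (1 + ‖z‖) ^ 2 := norm_riemannZeta₁_le (hre z hz).le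
      _ ≤ 3 * (5 + |s.im|) ^ 2 := by gcongr 3 * ?_ ^ 2; linarith
      _ ≤ 0.3 * (5 + |s.im|) ^ 4 := by
        have : 10 ≤ (5 + |s.im|) ^ 2 := by nlinarith [abs_nonneg s.im]
        nlinarith
      _ ≤ _ := by rw [hexp]; gcongr
  have hdist : ‖s - c‖ ≤ 3 / 2 - 2 * (ε / 2) := by
    have : s - c = ((s.re - 2 : ℝ) : ℂ) := by apply Complex.ext <;> simp [c]
    rw [this, norm_real, Real.norm_eq_abs, abs_le]
    constructor <;> linarith
  have hlog : 0 < Real.log (5 + |s.im|) := Real.log_pos (by linarith [abs_nonneg s.im])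
  convert norm_logDeriv_le_of_norm_le_mul_exp (by positivity) (by positivity)
    differentiable_riemannZeta₁.differentiableOn
    (fun z hz ↦ riemannZeta₁_ne_zero_of_riemannHypothesis hRH (hre z hz)) hbound hdist using 1
  field_simp
  ring

end LogDerivBound

section Plancherel

open FourierTransform

variable {E F : Type*} [NormedAddCommGroup E] [InnerProductSpace ℝ E] [FiniteDimensional ℝ E]
  [MeasurableSpace E] [BorelSpace E] [NormedAddCommGroup F] [InnerProductSpace ℂ F] {g : E → F}

lemma continuous_fourier_of_integrable (hg : Integrable g) : Continuous (𝓕 g) :=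
  VectorFourier.fourierIntegral_continuous continuous_fourierChar (by exact continuous_inner) hg

variable [CompleteSpace F]

lemma fourier_toLp_ae_eq (hg : Integrable g) (hg2 : MemLp g 2) :
    (𝓕 (hg2.toLp g) : Lp F 2 (volume : Measure E)) =ᵐ[volume] 𝓕 g := by
  refine ae_eq_of_integral_contDiff_smul_eq ((Lp.memLp _).locallyIntegrable (by norm_num))
    (continuous_fourier_of_integrable hg).locallyIntegrable fun φ hφ hφc ↦ ?_
  have hcs : HasCompactSupport (Complex.ofRealCLM ∘ φ) := hφc.comp_left rfl
  set Φ := hcs.toSchwartzMap (by fun_prop : ContDiff ℝ (⊤ : ℕ∞) (Complex.ofRealCLM ∘ φ))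
  have hdistrib : ∫ x, (𝓕 Φ) x • hg2.toLp g x
      = ∫ x, Φ x • (𝓕 (hg2.toLp g) : Lp F 2 (volume : Measure E)) x := by
    have := DFunLike.congr_fun (Lp.fourier_toTemperedDistribution_eq (hg2.toLp g)) Φ
    rwa [TemperedDistribution.fourier_apply, Lp.toTemperedDistribution_apply,
      Lp.toTemperedDistribution_apply] at this
  calc
    _ = ∫ x, Φ x • (𝓕 (hg2.toLp g) : Lp F 2 (volume : Measure E)) x := by simp [Φ]
    _ = ∫ x, (𝓕 Φ) x • g x := by
      rw [← hdistrib]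
      refine integral_congr_ae ?_
      filter_upwards [hg2.coeFn_toLp] with x hx
      rw [hx]
    _ = ∫ x, Φ x • 𝓕 g x := by
      rw [SchwartzMap.fourier_coe]
      simpa [Real.fourier_eq, VectorFourier.fourierIntegral] using
        VectorFourier.integral_fourierIntegral_smul_eq_flip (L := innerₗ E)
          continuous_fourierChar continuous_inner (Φ.integrable (μ := volume)) hg
    _ = _ := by simp [Φ]

theorem lintegral_enorm_fourier_sq (hg : Integrable g) (hg2 : MemLp g 2) :
    ∫⁻ x, ‖𝓕 g x‖ₑ ^ 2 = ∫⁻ x, ‖g x‖ₑ ^ 2 := by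
  have hnorm := congrArg ENNReal.ofReal (Lp.norm_fourier_eq (hg2.toLp g))
  rw [ofReal_norm, ofReal_norm, Lp.enorm_def, Lp.enorm_def,
    eLpNorm_congr_ae (fourier_toLp_ae_eq hg hg2), eLpNorm_congr_ae hg2.coeFn_toLp] at hnorm
  have hsq (u : E → F) : eLpNorm u 2 volume ^ 2 = ∫⁻ x, ‖u x‖ₑ ^ 2 := by
    simpa using eLpNorm_nnreal_pow_eq_lintegral (f := u) (μ := volume) two_ne_zero
  rw [← hsq, ← hsq, hnorm]

theorem lintegral_enorm_fourierInv_sq (hg : Integrable g) (hg2 : MemLp g 2) :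
    ∫⁻ x, ‖𝓕⁻ g x‖ₑ ^ 2 = ∫⁻ x, ‖g x‖ₑ ^ 2 := by
  simp_rw [Real.fourierInv_eq_fourier_neg]
  rw [lintegral_neg_eq_self fun x ↦ ‖𝓕 g x‖ₑ ^ 2]
  exact lintegral_enorm_fourier_sq hg hg2

end Plancherel

section VerticalLine

open Complex Set Filter Topology

variable {E : Type*} [NormedAddCommGroup E] {f : ℂ → E} {a b C p : ℝ}

/-- The vertical line `Re s = σ`, with the imaginary part scaled by `2 * π` so that Fourier
transforms become integrals along the line without extra factors. -/
noncomputable def verticalLine (σ ξ : ℝ) : ℂ := σ + ((2 * π * ξ : ℝ) : ℂ) * I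

@[simp]
lemma verticalLine_re (σ ξ : ℝ) : (verticalLine σ ξ).re = σ := by simp [verticalLine]

@[simp]
lemma verticalLine_im (σ ξ : ℝ) : (verticalLine σ ξ).im = 2 * π * ξ := by simp [verticalLine]

lemma continuous_verticalLine (σ : ℝ) : Continuous (verticalLine σ) := by
  unfold verticalLine
  fun_prop

lemma integrable_comp_verticalLine {σ : ℝ} (hf : VerticalIntegrable f σ) :
    Integrable (fun ξ ↦ f (verticalLine σ ξ)) :=
  hf.comp_mul_left' (g := fun y : ℝ ↦ f (σ + y * I)) (by positivity : (2 * π : ℝ) ≠ 0)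

lemma verticalIntegrable_of_norm_le_rpow (hp : 1 < p)
    (hf : ∀ s : ℂ, s.re = a → ContinuousAt f s)
    (hbound : ∀ s : ℂ, s.re = a → ‖f s‖ ≤ C * (1 + |s.im|) ^ (-p)) :
    VerticalIntegrable f a := by
  have hmajorant : Integrable (fun y : ℝ ↦ C * (1 + ‖y‖) ^ (-p)) :=
    (integrable_one_add_norm (by simpa using hp)).const_mul C
  refine hmajorant.mono' (Continuous.aestronglyMeasurable ?_) (.of_forall fun y ↦ ?_)
  · exact continuous_iff_continuousAt.mpr fun y ↦
      ContinuousAt.comp (f := fun y : ℝ ↦ (a : ℂ) + y * I) (hf _ (by simp)) (by fun_prop)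
  · simpa using hbound (a + y * I) (by simp)

variable [NormedSpace ℂ E]

lemma integral_verticalLine (f : ℂ → E) (σ : ℝ) :
    ∫ ξ : ℝ, f (verticalLine σ ξ) = |(2 * π)⁻¹| • ∫ y : ℝ, f (σ + y * I) :=
  Measure.integral_comp_mul_left (fun y : ℝ ↦ f (σ + y * I)) (2 * π)

lemma tendsto_intervalIntegral_horizontal {ι : Type*} {l : Filter ι} {T : ι → ℝ} (hp : 0 < p)
    (hab : a ≤ b) (hT : Tendsto (fun i ↦ |T i|) l atTop)
    (hbound : ∀ s : ℂ, a ≤ s.re → s.re ≤ b → ‖f s‖ ≤ C * (1 + |s.im|) ^ (-p)) :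
    Tendsto (fun i ↦ ∫ x : ℝ in a..b, f (x + T i * I)) l (𝓝 0) := by
  have hmajorant : Tendsto (fun i ↦ C * (1 + |T i|) ^ (-p) * |b - a|) l (𝓝 0) := by
    have hrpow := (tendsto_rpow_neg_atTop hp).comp (tendsto_atTop_add_const_left _ 1 hT)
    simpa using (hrpow.const_mul C).mul_const |b - a|
  refine squeeze_zero_norm (fun i ↦ ?_) hmajorant
  refine intervalIntegral.norm_integral_le_of_norm_le_const fun x hx ↦ ?_
  rw [uIoc_of_le hab] at hx
  simpa using hbound (x + T i * I) (by simpa using hx.1.le) (by simpa using hx.2)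

lemma integral_vertical_eq_of_norm_le_rpow (hab : a ≤ b) (hp : 1 < p)
    (hf : ∀ s : ℂ, a ≤ s.re → s.re ≤ b → DifferentiableAt ℂ f s)
    (hbound : ∀ s : ℂ, a ≤ s.re → s.re ≤ b → ‖f s‖ ≤ C * (1 + |s.im|) ^ (-p)) :
    ∫ y : ℝ, f (a + y * I) = ∫ y : ℝ, f (b + y * I) := by
  have hvertical {σ : ℝ} (h₁ : a ≤ σ) (h₂ : σ ≤ b) :
      Tendsto (fun T : ℝ ↦ ∫ y : ℝ in (-T)..T, f (σ + y * I)) atTop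
        (𝓝 (∫ y : ℝ, f (σ + y * I))) :=
    intervalIntegral_tendsto_integral
      (verticalIntegrable_of_norm_le_rpow hp
        (fun s hs ↦ (hf s (hs ▸ h₁) (hs ▸ h₂)).continuousAt)
        (fun s hs ↦ hbound s (hs ▸ h₁) (hs ▸ h₂)))
      tendsto_neg_atTop_atBot tendsto_id
  have hrectangle (T : ℝ) : (((∫ x : ℝ in a..b, f (x + (-T : ℝ) * I)) -
      ∫ x : ℝ in a..b, f (x + (T : ℝ) * I)) + I • ∫ y : ℝ in (-T)..T, f (b + y * I)) -
      I • ∫ y : ℝ in (-T)..T, f (a + y * I) = 0 := by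
    have hdiff : DifferentiableOn ℂ f (uIcc a b ×ℂ uIcc (-T) T) := fun s hs ↦ by
      have hre := hs.1
      rw [mem_preimage, uIcc_of_le hab] at hre
      exact (hf s hre.1 hre.2).differentiableWithinAt
    simpa using integral_boundary_rect_eq_zero_of_differentiableOn f
      (a + (-T : ℝ) * I) (b + T * I) (by simpa using hdiff)
  have hbottom := tendsto_intervalIntegral_horizontal (T := fun T : ℝ ↦ -T) (by linarith) hab
    (by simpa using tendsto_abs_atTop_atTop) hbound
  have htop := tendsto_intervalIntegral_horizontal (T := fun T : ℝ ↦ T) (by linarith) hab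
    tendsto_abs_atTop_atTop hbound
  have hlimit := ((hbottom.sub htop).add ((hvertical hab le_rfl).const_smul I)).sub
    ((hvertical le_rfl hab).const_smul I)
  have hzero := tendsto_nhds_unique hlimit (by simp only [hrectangle]; exact tendsto_const_nhds)
  rw [sub_zero, zero_add, ← smul_sub, smul_eq_zero_iff_right I_ne_zero, sub_eq_zero] at hzero
  exact hzero.symm

end VerticalLine

section PsiLaplace

open Complex Set

variable {s : ℂ}

lemma mul_integral_psi_mul_cpow (hs : 1 < s.re) :
    s * ∫ t in Ioi (1 : ℝ), (Chebyshev.psi t : ℂ) * (t : ℂ) ^ (-(s + 1)) =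
      -deriv riemannZeta s / riemannZeta s := by
  have hnonneg (n : ℕ) : 0 ≤ ArithmeticFunction.vonMangoldt n :=
    ArithmeticFunction.vonMangoldt_nonneg
  have hgrowth : (fun n ↦ ∑ k ∈ Finset.Icc 1 n, ArithmeticFunction.vonMangoldt k)
      =O[Filter.atTop] fun n : ℕ ↦ (n : ℝ) ^ (1 : ℝ) := by
    refine .of_bound (Real.log 4 + 4) (.of_forall fun n ↦ ?_)
    have hpsi := Chebyshev.psi_le_const_mul_self (x := n) (by positivity)
    rw [Chebyshev.psi, Nat.floor_natCast] at hpsi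
    rwa [Real.rpow_one, Real.norm_of_nonneg (Finset.sum_nonneg fun _ _ ↦ hnonneg _),
      Real.norm_of_nonneg (by positivity)]
  rw [← ArithmeticFunction.LSeries_vonMangoldt_eq_deriv_riemannZeta_div hs,
    LSeries_eq_mul_integral_of_nonneg _ zero_le_one hs hgrowth hnonneg]
  simp only [Chebyshev.psi, ofReal_sum]
  rfl

lemma integral_psi_exp_mul_exp (hs : 1 < s.re) :
    ∫ u in Ioi (0 : ℝ), (Chebyshev.psi (Real.exp u) : ℂ) * cexp (-s * u) =
      -deriv riemannZeta s / riemannZeta s / s := by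
  rw [← mul_integral_psi_mul_cpow hs,
    mul_div_cancel_left₀ _ (ne_zero_of_re_pos (one_pos.trans hs)), ← Real.exp_zero,
    ← integral_comp_exp_Ioi]
  refine setIntegral_congr_fun measurableSet_Ioi fun u _ ↦ ?_
  have hcpow : ((Real.exp u : ℝ) : ℂ) ^ (-(s + 1)) = cexp (u * -(s + 1)) := by
    rw [cpow_def_of_ne_zero (ofReal_ne_zero.mpr (Real.exp_ne_zero u)),
      ← ofReal_log (Real.exp_pos u).le, Real.log_exp]
  simp only [real_smul, hcpow]
  rw [ofReal_exp, mul_left_comm, ← Complex.exp_add]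
  ring_nf

/-- The error term `ψ(x) - x` of the prime number theorem in the variable `u = log x`, cut off to
`u > 0`. -/
noncomputable def psiError : ℝ → ℝ :=
  (Ioi 0).indicator fun u ↦ Chebyshev.psi (Real.exp u) - Real.exp u

/-- The Laplace transform of `psiError`. It equals `-ζ'/ζ(s)/s - 1/(s - 1)`; written in terms of
`riemannZeta₁ s = (s - 1) ζ(s)` it makes sense at `s = 1` as well. -/
noncomputable def psiErrorLaplace (s : ℂ) : ℂ := -(1 + logDeriv riemannZeta₁ s) / s

lemma psiError_of_pos {u : ℝ} (hu : 0 < u) :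
    psiError u = Chebyshev.psi (Real.exp u) - Real.exp u :=
  indicator_of_mem hu _

lemma psiError_of_nonpos {u : ℝ} (hu : u ≤ 0) : psiError u = 0 :=
  indicator_of_notMem (notMem_Ioi.mpr hu) _

lemma measurable_psiError : Measurable psiError :=
  ((Chebyshev.psi_mono.measurable.comp Real.measurable_exp).sub Real.measurable_exp).indicator
    measurableSet_Ioi

lemma abs_psiError_le (u : ℝ) : |psiError u| ≤ (Real.log 4 + 5) * Real.exp u := by
  have : 0 ≤ Real.log 4 := Real.log_nonneg (by norm_num)
  have hexp := Real.exp_pos u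
  rcases lt_or_ge 0 u with hu | hu
  · have hle := Chebyshev.psi_le_const_mul_self hexp.le
    have hnonneg := Chebyshev.psi_nonneg (Real.exp u)
    rw [psiError_of_pos hu, abs_le]
    constructor <;> nlinarith
  · rw [psiError_of_nonpos hu, abs_zero]
    positivity

lemma integrable_psiError_mul_exp (hs : 1 < s.re) :
    Integrable (fun u : ℝ ↦ (psiError u : ℂ) * cexp (-s * u)) := by
  have hmajorant : Integrable ((Ioi (0 : ℝ)).indicator
      fun u ↦ (Real.log 4 + 5) * Real.exp ((1 - s.re) * u)) := by
    rw [integrable_indicator_iff measurableSet_Ioi]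
    exact (integrableOn_exp_mul_Ioi (by linarith) 0).const_mul _
  have hmeas : Measurable fun u : ℝ ↦ (psiError u : ℂ) * cexp (-s * u) :=
    (measurable_ofReal.comp measurable_psiError).mul (by fun_prop)
  refine hmajorant.mono' hmeas.aestronglyMeasurable (.of_forall fun u ↦ ?_)
  rcases lt_or_ge 0 u with hu | hu
  · have hre : (-s * u).re = -s.re * u := by simp
    rw [indicator_of_mem (mem_Ioi.mpr hu), norm_mul, norm_exp, norm_real, Real.norm_eq_abs, hre,
      show (1 - s.re) * u = u + -s.re * u by ring, Real.exp_add, ← mul_assoc]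
    gcongr
    exact abs_psiError_le u
  · simp [indicator_of_notMem (notMem_Ioi.mpr hu), psiError_of_nonpos hu]

lemma neg_deriv_riemannZeta_div_eq_psiErrorLaplace_add (hs : 1 < s.re) :
    -deriv riemannZeta s / riemannZeta s / s = psiErrorLaplace s + 1 / (s - 1) := by
  have hs₀ : s ≠ 0 := ne_zero_of_re_pos (one_pos.trans hs)
  have hs₁ : s ≠ 1 := by
    rintro rfl
    exact lt_irrefl _ hs
  have hsub : s - 1 ≠ 0 := sub_ne_zero.mpr hs₁
  have hzeta := riemannZeta_ne_zero_of_one_lt_re hs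
  rw [riemannZeta_eq_inv_sub_mul hs₁] at hzeta
  have hzeta₁ : riemannZeta₁ s ≠ 0 := right_ne_zero_of_mul hzeta
  rw [deriv_riemannZeta_eq_neg_inv_sub_sq_mul_add hs₁, riemannZeta_eq_inv_sub_mul hs₁,
    psiErrorLaplace, logDeriv_apply]
  field_simp
  ring

lemma integral_psiError_mul_exp (hs : 1 < s.re) :
    ∫ u : ℝ, (psiError u : ℂ) * cexp (-s * u) = psiErrorLaplace s := by
  have hsplit : (fun u : ℝ ↦ (psiError u : ℂ) * cexp (-s * u)) = (Ioi (0 : ℝ)).indicator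
      fun u ↦ (Chebyshev.psi (Real.exp u) : ℂ) * cexp (-s * u) - cexp ((1 - s) * u) := by
    ext u
    rcases lt_or_ge 0 u with hu | hu
    · rw [indicator_of_mem (mem_Ioi.mpr hu), psiError_of_pos hu, ofReal_sub, sub_mul, ofReal_exp,
        ← Complex.exp_add]
      ring_nf
    · simp [indicator_of_notMem (notMem_Ioi.mpr hu), psiError_of_nonpos hu]
  have hexp : IntegrableOn (fun u : ℝ ↦ cexp ((1 - s) * u)) (Ioi 0) :=
    integrableOn_exp_mul_complex_Ioi (by simpa using hs) 0
  have hdiff := integrable_psiError_mul_exp hs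
  rw [hsplit, integrable_indicator_iff measurableSet_Ioi] at hdiff
  have hpsi : IntegrableOn (fun u : ℝ ↦ (Chebyshev.psi (Real.exp u) : ℂ) * cexp (-s * u))
      (Ioi 0) :=
    (hdiff.add hexp).congr (.of_forall fun u ↦ by simp)
  rw [hsplit, integral_indicator measurableSet_Ioi, integral_sub hpsi hexp,
    integral_psi_exp_mul_exp hs, integral_exp_mul_complex_Ioi (by simpa using hs),
    neg_deriv_riemannZeta_div_eq_psiErrorLaplace_add hs, ofReal_zero, mul_zero, Complex.exp_zero,
    ← neg_sub s 1, neg_div_neg_eq, add_sub_cancel_right]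

end PsiLaplace

section LaplacePrimitive

open Complex Set FourierTransform
open scoped Convolution

variable {f : ℝ → ℂ} {c : ℝ}

lemma fourier_mul_exp_eq_integral (f : ℝ → ℂ) (c ξ : ℝ) :
    𝓕 (fun u : ℝ ↦ f u * cexp (-c * u)) ξ = ∫ u, f u * cexp (-verticalLine c ξ * u) := by
  rw [Real.fourier_real_eq_integral_exp_smul]
  congr 1 with u
  rw [smul_eq_mul, mul_left_comm, ← Complex.exp_add, verticalLine]
  congr 2
  push_cast
  ring

lemma indicator_one_mul_eq_indicator (S : Set ℝ) (g : ℝ → ℂ) :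
    (fun u ↦ S.indicator 1 u * g u) = S.indicator g := by
  ext u
  simpa using (indicator_mul_left S (1 : ℝ → ℂ) g (i := u)).symm

lemma integrable_indicator_Ici_mul_exp (hc : 0 < c) :
    Integrable fun u : ℝ ↦ (Ici (0 : ℝ)).indicator 1 u * cexp (-c * u) := by
  rw [indicator_one_mul_eq_indicator, integrable_indicator_iff measurableSet_Ici,
    integrableOn_Ici_iff_integrableOn_Ioi]
  exact integrableOn_exp_mul_complex_Ioi (by simpa using hc) 0

lemma fourier_indicator_Ici_mul_exp (hc : 0 < c) (ξ : ℝ) :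
    𝓕 (fun u : ℝ ↦ (Ici (0 : ℝ)).indicator 1 u * cexp (-c * u)) ξ = 1 / verticalLine c ξ := by
  rw [fourier_mul_exp_eq_integral, indicator_one_mul_eq_indicator (Ici 0),
    integral_indicator measurableSet_Ici, integral_Ici_eq_integral_Ioi,
    integral_exp_mul_complex_Ioi (by simpa using hc)]
  simp

-- Writing `∫ t in Iic u, f t` as `f ⋆ 𝟙_[0, ∞)` turns integration into division by `s`.
lemma convolution_indicator_Ici_mul_exp (f : ℝ → ℂ) (c : ℝ) :
    (fun u : ℝ ↦ f u * cexp (-c * u)) ⋆[ContinuousLinearMap.mul ℂ ℂ]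
        (fun u : ℝ ↦ (Ici (0 : ℝ)).indicator 1 u * cexp (-c * u)) =
      fun u : ℝ ↦ (∫ t in Iic u, f t) * cexp (-c * u) := by
  ext u
  rw [convolution_def, ← integral_indicator measurableSet_Iic, ← integral_mul_const]
  congr 1 with t
  rw [ContinuousLinearMap.mul_apply']
  by_cases htu : t ≤ u
  · rw [indicator_of_mem (show u - t ∈ Ici (0 : ℝ) by simpa using htu),
      indicator_of_mem (mem_Iic.mpr htu), Pi.one_apply, one_mul, mul_assoc, ← Complex.exp_add]
    congr 2
    push_cast
    ring
  · simp [htu]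

lemma integrable_primitive_mul_exp (hc : 0 < c)
    (hf : Integrable fun u : ℝ ↦ f u * cexp (-c * u)) :
    Integrable fun u : ℝ ↦ (∫ t in Iic u, f t) * cexp (-c * u) := by
  rw [← convolution_indicator_Ici_mul_exp]
  exact hf.integrable_convolution _ (integrable_indicator_Ici_mul_exp hc)

lemma fourier_primitive_mul_exp (hc : 0 < c)
    (hf : Integrable fun u : ℝ ↦ f u * cexp (-c * u)) (ξ : ℝ) :
    𝓕 (fun u : ℝ ↦ (∫ t in Iic u, f t) * cexp (-c * u)) ξ =
      (∫ u, f u * cexp (-verticalLine c ξ * u)) / verticalLine c ξ := by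
  rw [← convolution_indicator_Ici_mul_exp,
    Real.fourier_mul_convolution_eq hf (integrable_indicator_Ici_mul_exp hc),
    fourier_indicator_Ici_mul_exp hc, fourier_mul_exp_eq_integral, mul_one_div]

end LaplacePrimitive

section PsiErrorPrimitive

open Complex Set FourierTransform

/-- The primitive `∫ t in Iic u, psiError t`. Its Laplace transform decays fast enough for
absolutely convergent Fourier inversion, which that of `psiError` does not. -/
noncomputable def psiErrorPrimitive (u : ℝ) : ℝ := ∫ t in Iic u, psiError t

lemma locallyIntegrable_psiError : LocallyIntegrable psiError := by
  have hmajorant : LocallyIntegrable fun u ↦ (Real.log 4 + 5) * Real.exp u :=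
    Continuous.locallyIntegrable (by fun_prop)
  refine hmajorant.mono measurable_psiError.aestronglyMeasurable (.of_forall fun u ↦ ?_)
  exact (abs_psiError_le u).trans (le_abs_self _)

lemma intervalIntegrable_psiError (a b : ℝ) : IntervalIntegrable psiError volume a b :=
  (locallyIntegrable_psiError.integrableOn_isCompact isCompact_uIcc).intervalIntegrable

lemma integrableOn_psiError_Iic (u : ℝ) : IntegrableOn psiError (Iic u) := by
  have hneg : IntegrableOn psiError (Iic 0) :=
    integrableOn_zero.congr_fun (fun x hx ↦ (psiError_of_nonpos hx).symm) measurableSet_Iic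
  have hpos : IntegrableOn psiError (Icc 0 (max u 0)) :=
    locallyIntegrable_psiError.integrableOn_isCompact isCompact_Icc
  refine (hneg.union hpos).mono_set fun x hx ↦ ?_
  exact (le_total x 0).imp id fun h ↦ ⟨h, (mem_Iic.mp hx).trans (le_max_left _ _)⟩

lemma psiErrorPrimitive_sub (a b : ℝ) :
    psiErrorPrimitive b - psiErrorPrimitive a = ∫ t in a..b, psiError t :=
  intervalIntegral.integral_Iic_sub_Iic (integrableOn_psiError_Iic a) (integrableOn_psiError_Iic b)

lemma continuous_psiErrorPrimitive : Continuous psiErrorPrimitive := by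
  have heq : psiErrorPrimitive = fun u ↦ psiErrorPrimitive 0 + ∫ t in (0 : ℝ)..u, psiError t := by
    ext u
    rw [← psiErrorPrimitive_sub, add_sub_cancel]
  rw [heq]
  exact continuous_const.add
    (intervalIntegral.continuous_primitive intervalIntegrable_psiError 0)

lemma ofReal_psiErrorPrimitive (u : ℝ) :
    (psiErrorPrimitive u : ℂ) = ∫ t in Iic u, (psiError t : ℂ) :=
  integral_ofReal.symm

lemma integrable_psiErrorPrimitive_mul_exp {c : ℝ} (hc : 1 < c) :
    Integrable fun u : ℝ ↦ (psiErrorPrimitive u : ℂ) * cexp (-c * u) := by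
  simp only [ofReal_psiErrorPrimitive]
  exact integrable_primitive_mul_exp (one_pos.trans hc)
    (integrable_psiError_mul_exp (by simpa using hc))

lemma fourier_psiErrorPrimitive_mul_exp {c : ℝ} (hc : 1 < c) (ξ : ℝ) :
    𝓕 (fun u : ℝ ↦ (psiErrorPrimitive u : ℂ) * cexp (-c * u)) ξ =
      psiErrorLaplace (verticalLine c ξ) / verticalLine c ξ := by
  simp only [ofReal_psiErrorPrimitive]
  rw [fourier_primitive_mul_exp (one_pos.trans hc)
      (integrable_psiError_mul_exp (by simpa using hc)),
    integral_psiError_mul_exp (by simpa using hc)]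

end PsiErrorPrimitive

section PsiErrorInversion

open Complex Set FourierTransform

variable {s : ℂ}

lemma log_five_add_le_mul_rpow {a t : ℝ} (ha : 0 < a) (ha₁ : a ≤ 1) (ht : 0 ≤ t) :
    Real.log (5 + t) ≤ 5 / a * (1 + t) ^ a := by
  have hfive : (5 : ℝ) ^ a ≤ 5 := Real.rpow_le_self_of_one_le (by norm_num) ha₁
  calc Real.log (5 + t) ≤ (5 + t) ^ a / a := Real.log_le_rpow_div (by positivity) ha
    _ ≤ (5 * (1 + t)) ^ a / a := by gcongr; linarith
    _ = 5 ^ a * (1 + t) ^ a / a := by rw [Real.mul_rpow (by norm_num) (by positivity)]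
    _ ≤ 5 * (1 + t) ^ a / a := by gcongr
    _ = 5 / a * (1 + t) ^ a := by ring

lemma one_add_abs_im_div_four_le_norm (hs : 1 / 2 ≤ s.re) : (1 + |s.im|) / 4 ≤ ‖s‖ := by
  have him := abs_im_le_norm s
  have hre := re_le_norm s
  linarith [abs_nonneg s.im]

lemma norm_div_self_le_of_norm_le_rpow {z : ℂ} {C q : ℝ} (hs : 1 / 2 ≤ s.re)
    (hz : ‖z‖ ≤ C * (1 + |s.im|) ^ q) : ‖z / s‖ ≤ 4 * C * (1 + |s.im|) ^ (q - 1) := by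
  have hpos : 0 < 1 + |s.im| := by positivity
  have hnorm := one_add_abs_im_div_four_le_norm hs
  calc ‖z / s‖ = ‖z‖ / ‖s‖ := norm_div z s
    _ ≤ ‖z‖ / ((1 + |s.im|) / 4) := by gcongr
    _ ≤ C * (1 + |s.im|) ^ q / ((1 + |s.im|) / 4) := by gcongr
    _ = 4 * C * (1 + |s.im|) ^ (q - 1) := by
      rw [Real.rpow_sub_one hpos.ne']
      field_simp

lemma exists_norm_psiErrorLaplace_le (hRH : RiemannHypothesis) {ε a : ℝ} (hε : 0 < ε)
    (ha : 0 < a) (ha₁ : a ≤ 1) :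
    ∃ C, 0 < C ∧ ∀ s : ℂ, 1 / 2 + ε ≤ s.re → s.re ≤ 2 →
      ‖psiErrorLaplace s‖ ≤ C * (1 + |s.im|) ^ (a - 1) := by
  refine ⟨4 * (1 + 48 / ε ^ 2 * (5 / a)), by positivity, fun s hs hs₂ ↦
    norm_div_self_le_of_norm_le_rpow (by linarith) ?_⟩
  have hone : 1 ≤ (1 + |s.im|) ^ a := Real.one_le_rpow (by linarith [abs_nonneg s.im]) ha.le
  calc ‖-(1 + logDeriv riemannZeta₁ s)‖ ≤ 1 + ‖logDeriv riemannZeta₁ s‖ := by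
        rw [norm_neg]
        simpa using norm_add_le 1 (logDeriv riemannZeta₁ s)
    _ ≤ 1 + 48 / ε ^ 2 * (5 / a * (1 + |s.im|) ^ a) := by
        gcongr
        refine (norm_logDeriv_riemannZeta₁_le hRH hε hs hs₂).trans ?_
        gcongr
        exact log_five_add_le_mul_rpow ha ha₁ (abs_nonneg _)
    _ ≤ (1 + 48 / ε ^ 2 * (5 / a)) * (1 + |s.im|) ^ a := by linarith

lemma exists_norm_psiErrorLaplace_div_self_le (hRH : RiemannHypothesis) {ε : ℝ} (hε : 0 < ε) :
    ∃ C, 0 < C ∧ ∀ s : ℂ, 1 / 2 + ε ≤ s.re → s.re ≤ 2 →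
      ‖psiErrorLaplace s / s‖ ≤ C * (1 + |s.im|) ^ (-(3 / 2) : ℝ) := by
  obtain ⟨C, hC, hbound⟩ :=
    exists_norm_psiErrorLaplace_le hRH hε (a := 1 / 2) (by norm_num) (by norm_num)
  refine ⟨4 * C, by positivity, fun s hs hs₂ ↦ ?_⟩
  convert norm_div_self_le_of_norm_le_rpow (by linarith) (hbound s hs hs₂) using 3
  norm_num

lemma differentiableAt_psiErrorLaplace (hRH : RiemannHypothesis) (hs : 1 / 2 < s.re) :
    DifferentiableAt ℂ psiErrorLaplace s := by
  have hs₀ : s ≠ 0 := ne_zero_of_re_pos (by linarith)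
  have hderiv : DifferentiableAt ℂ (deriv riemannZeta₁) s :=
    (differentiable_riemannZeta₁.contDiff (n := 2)).differentiable_deriv_two s
  have hlogDeriv : DifferentiableAt ℂ (logDeriv riemannZeta₁) s :=
    hderiv.div (differentiable_riemannZeta₁ s)
      (riemannZeta₁_ne_zero_of_riemannHypothesis hRH hs)
  exact (hlogDeriv.const_add 1).neg.div differentiableAt_id hs₀

lemma differentiableAt_psiErrorLaplace_div_self (hRH : RiemannHypothesis) (hs : 1 / 2 < s.re) :
    DifferentiableAt ℂ (fun s ↦ psiErrorLaplace s / s) s :=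
  (differentiableAt_psiErrorLaplace hRH hs).div differentiableAt_id
    (ne_zero_of_re_pos (by linarith))

lemma integrable_psiErrorLaplace_div_self (hRH : RiemannHypothesis) {σ : ℝ} (hσ : 1 / 2 < σ)
    (hσ₂ : σ ≤ 2) :
    Integrable fun ξ ↦ psiErrorLaplace (verticalLine σ ξ) / verticalLine σ ξ := by
  obtain ⟨C, -, hbound⟩ :=
    exists_norm_psiErrorLaplace_div_self_le hRH (ε := σ - 1 / 2) (by linarith)
  refine integrable_comp_verticalLine (verticalIntegrable_of_norm_le_rpow
    (f := fun s ↦ psiErrorLaplace s / s) (C := C) (p := 3 / 2) (by norm_num)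
    (fun s hs ↦ ?_) (fun s hs ↦ ?_))
  · exact (differentiableAt_psiErrorLaplace_div_self hRH (by linarith)).continuousAt
  · exact hbound s (by linarith) (by linarith)

lemma psiErrorPrimitive_eq_integral_re_two (hRH : RiemannHypothesis) (u : ℝ) :
    (psiErrorPrimitive u : ℂ) = ∫ ξ : ℝ, psiErrorLaplace (verticalLine 2 ξ) / verticalLine 2 ξ *
      cexp (verticalLine 2 ξ * u) := by
  have hcont : Continuous fun u : ℝ ↦ (psiErrorPrimitive u : ℂ) * cexp (-(2 : ℝ) * u) :=
    (continuous_ofReal.comp continuous_psiErrorPrimitive).mul (by fun_prop)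
  have hfourier : 𝓕 (fun u : ℝ ↦ (psiErrorPrimitive u : ℂ) * cexp (-(2 : ℝ) * u)) =
      fun ξ ↦ psiErrorLaplace (verticalLine 2 ξ) / verticalLine 2 ξ :=
    funext (fourier_psiErrorPrimitive_mul_exp one_lt_two)
  have hinversion := congrFun (hcont.fourierInv_fourier_eq
    (integrable_psiErrorPrimitive_mul_exp one_lt_two)
    (hfourier ▸ integrable_psiErrorLaplace_div_self hRH (by norm_num) le_rfl)) u
  rw [hfourier, Real.fourierInv_eq'] at hinversion
  have hundamp : (psiErrorPrimitive u : ℂ) =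
      psiErrorPrimitive u * cexp (-(2 : ℝ) * u) * cexp ((2 : ℝ) * u) := by
    rw [mul_assoc, ← Complex.exp_add]
    simp
  rw [hundamp, ← hinversion, ← integral_mul_const]
  congr 1 with ξ
  rw [smul_eq_mul, mul_right_comm, ← Complex.exp_add, mul_comm, verticalLine]
  congr 2
  simp
  ring

lemma psiErrorPrimitive_eq_integral (hRH : RiemannHypothesis) {σ : ℝ} (hσ : 1 / 2 < σ)
    (hσ₂ : σ ≤ 2) (u : ℝ) :
    (psiErrorPrimitive u : ℂ) = ∫ ξ : ℝ, psiErrorLaplace (verticalLine σ ξ) / verticalLine σ ξ *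
      cexp (verticalLine σ ξ * u) := by
  obtain ⟨C, -, hbound⟩ :=
    exists_norm_psiErrorLaplace_div_self_le hRH (ε := σ - 1 / 2) (by linarith)
  rw [psiErrorPrimitive_eq_integral_re_two hRH,
    integral_verticalLine (fun s ↦ psiErrorLaplace s / s * cexp (s * u)),
    integral_verticalLine (fun s ↦ psiErrorLaplace s / s * cexp (s * u))]
  congr 1
  symm
  refine integral_vertical_eq_of_norm_le_rpow (f := fun s ↦ psiErrorLaplace s / s * cexp (s * u))
    (C := C * Real.exp (2 * |u|)) (p := 3 / 2) hσ₂ (by norm_num)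
    (fun s hs _ ↦ ?_) (fun s hs hs₂ ↦ ?_)
  · exact (differentiableAt_psiErrorLaplace_div_self hRH (by linarith)).mul (by fun_prop)
  · have hre : (s * u).re ≤ 2 * |u| := by
      rw [re_mul_ofReal]
      nlinarith [le_abs_self u, abs_nonneg u]
    have hnorm := hbound s (by linarith) hs₂
    rw [norm_mul, norm_exp, mul_right_comm]
    gcongr
    exact (norm_nonneg _).trans hnorm

end PsiErrorInversion

section ExpSubOne

open Complex

lemma norm_exp_sub_one_le_of_re_le {z : ℂ} {b : ℝ} (hb : 0 ≤ b) (hz : z.re ≤ b) :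
    ‖cexp z - 1‖ ≤ Real.exp b * ‖z‖ := by
  have hderiv (w : ℂ) (hw : w ∈ {w : ℂ | w.re ≤ b}) : ‖deriv cexp w‖ ≤ Real.exp b := by
    rw [Complex.deriv_exp, norm_exp]
    exact Real.exp_le_exp.mpr hw
  simpa using (convex_halfSpace_re_le b).norm_image_sub_le_of_norm_deriv_le
    (fun w _ ↦ Complex.differentiableAt_exp) hderiv (x := 0) (by simpa using hb) hz

lemma norm_exp_sub_one_le_three_mul {z : ℂ} (hz : z.re ≤ 1) : ‖cexp z - 1‖ ≤ 3 * ‖z‖ := by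
  refine (norm_exp_sub_one_le_of_re_le zero_le_one hz).trans ?_
  gcongr
  linarith [Real.exp_one_lt_d9]

lemma norm_exp_sub_one_le_four_mul_rpow {z : ℂ} {r : ℝ} (hz : z.re ≤ 1) (hr : 0 ≤ r)
    (hr₁ : r ≤ 1) : ‖cexp z - 1‖ ≤ 4 * ‖z‖ ^ r := by
  rcases le_total ‖z‖ 1 with hsmall | hlarge
  · have hpow : ‖z‖ ≤ ‖z‖ ^ r := Real.self_le_rpow_of_le_one (norm_nonneg z) hsmall hr₁
    linarith [norm_exp_sub_one_le_three_mul hz, norm_nonneg z]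
  · have hexp : ‖cexp z - 1‖ ≤ 4 := by
      refine (norm_sub_le _ _).trans ?_
      rw [norm_exp, norm_one]
      linarith [Real.exp_le_exp.mpr hz, Real.exp_one_lt_d9]
    linarith [Real.one_le_rpow hlarge hr]

end ExpSubOne

section MeanIncrement

open Complex Set Filter Topology FourierTransform

variable {σ lam κ : ℝ}

/-- The mean of `t ↦ psiError (t + lam) - psiError t` over `[u, u + κ]`. The averaging makes its
Laplace transform integrable along vertical lines. -/
noncomputable def psiErrorMeanIncrement (lam κ u : ℝ) : ℝ :=
  κ⁻¹ * (psiErrorPrimitive (u + lam + κ) - psiErrorPrimitive (u + lam)) -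
    κ⁻¹ * (psiErrorPrimitive (u + κ) - psiErrorPrimitive u)

/-- The bilateral Laplace transform of `psiErrorMeanIncrement lam κ`. -/
noncomputable def psiErrorMeanIncrementLaplace (lam κ : ℝ) (s : ℂ) : ℂ :=
  psiErrorLaplace s / s * ((cexp (s * lam) - 1) * (cexp (s * κ) - 1) / κ)

lemma continuous_psiErrorMeanIncrement (lam κ : ℝ) :
    Continuous (psiErrorMeanIncrement lam κ) := by
  have := continuous_psiErrorPrimitive
  unfold psiErrorMeanIncrement
  fun_prop

lemma integrable_psiErrorLaplace_div_self_mul_exp (hRH : RiemannHypothesis) (hσ : 1 / 2 < σ)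
    (hσ₂ : σ ≤ 2) (v : ℝ) :
    Integrable fun ξ ↦ psiErrorLaplace (verticalLine σ ξ) / verticalLine σ ξ *
      cexp (verticalLine σ ξ * v) := by
  have hcont := continuous_verticalLine σ
  have hexp : Continuous fun ξ ↦ cexp (verticalLine σ ξ * v) := by fun_prop
  refine (integrable_psiErrorLaplace_div_self hRH hσ hσ₂).mul_bdd (c := Real.exp (σ * v))
    hexp.aestronglyMeasurable (.of_forall fun ξ ↦ ?_)
  simp [norm_exp]

lemma psiErrorMeanIncrementLaplace_mul_exp (lam κ u : ℝ) (s : ℂ) :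
    psiErrorMeanIncrementLaplace lam κ s * cexp (s * u) =
      (κ : ℂ)⁻¹ * (psiErrorLaplace s / s * cexp (s * (u + lam + κ : ℝ)) -
        psiErrorLaplace s / s * cexp (s * (u + lam : ℝ))) -
      (κ : ℂ)⁻¹ * (psiErrorLaplace s / s * cexp (s * (u + κ : ℝ)) -
        psiErrorLaplace s / s * cexp (s * u)) := by
  simp only [psiErrorMeanIncrementLaplace, ofReal_add, mul_add, Complex.exp_add]
  ring

lemma integrable_psiErrorMeanIncrementLaplace (hRH : RiemannHypothesis) (hσ : 1 / 2 < σ)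
    (hσ₂ : σ ≤ 2) (lam κ : ℝ) :
    Integrable fun ξ ↦ psiErrorMeanIncrementLaplace lam κ (verticalLine σ ξ) := by
  have hshift (v w : ℝ) := ((integrable_psiErrorLaplace_div_self_mul_exp hRH hσ hσ₂ v).sub
    (integrable_psiErrorLaplace_div_self_mul_exp hRH hσ hσ₂ w)).const_mul (κ : ℂ)⁻¹
  refine ((hshift (0 + lam + κ) (0 + lam)).sub (hshift (0 + κ) 0)).congr (.of_forall fun ξ ↦ ?_)
  simpa using (psiErrorMeanIncrementLaplace_mul_exp lam κ 0 (verticalLine σ ξ)).symm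

lemma integral_psiErrorMeanIncrementLaplace_mul_exp (hRH : RiemannHypothesis) (hσ : 1 / 2 < σ)
    (hσ₂ : σ ≤ 2) (lam κ u : ℝ) :
    ∫ ξ, psiErrorMeanIncrementLaplace lam κ (verticalLine σ ξ) * cexp (verticalLine σ ξ * u) =
      psiErrorMeanIncrement lam κ u := by
  have hint := integrable_psiErrorLaplace_div_self_mul_exp hRH hσ hσ₂
  have hshift (v w : ℝ) : Integrable fun ξ ↦ (κ : ℂ)⁻¹ *
      (psiErrorLaplace (verticalLine σ ξ) / verticalLine σ ξ * cexp (verticalLine σ ξ * v) -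
        psiErrorLaplace (verticalLine σ ξ) / verticalLine σ ξ * cexp (verticalLine σ ξ * w)) :=
    ((hint v).sub (hint w)).const_mul _
  simp only [psiErrorMeanIncrementLaplace_mul_exp]
  rw [integral_sub (hshift _ _) (hshift _ _), integral_const_mul, integral_const_mul,
    integral_sub (hint _) (hint _), integral_sub (hint _) (hint _)]
  simp only [← psiErrorPrimitive_eq_integral hRH hσ hσ₂, psiErrorMeanIncrement]
  push_cast
  rfl

lemma fourierInv_psiErrorMeanIncrementLaplace (hRH : RiemannHypothesis) (hσ : 1 / 2 < σ)
    (hσ₂ : σ ≤ 2) (lam κ u : ℝ) :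
    𝓕⁻ (fun ξ ↦ psiErrorMeanIncrementLaplace lam κ (verticalLine σ ξ)) u =
      psiErrorMeanIncrement lam κ u * cexp (-σ * u) := by
  rw [← integral_psiErrorMeanIncrementLaplace_mul_exp hRH hσ hσ₂, Real.fourierInv_eq',
    ← integral_mul_const]
  congr 1 with ξ
  rw [smul_eq_mul, mul_assoc (psiErrorMeanIncrementLaplace _ _ _), ← Complex.exp_add, mul_comm]
  congr 2
  simp only [verticalLine, RCLike.inner_apply, conj_trivial]
  push_cast
  ring

lemma norm_psiErrorMeanIncrementLaplace_le {s : ℂ} {C ε : ℝ} (hε : 0 < ε) (hε₁ : ε ≤ 1 / 2)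
    (hs : s.re = 1 / 2 + ε) (hbound : ‖psiErrorLaplace s‖ ≤ C * (1 + |s.im|) ^ (ε / 4 - 1))
    (hlam : 0 < lam) (hlam₁ : lam ≤ 1) (hκ : 0 < κ) (hκ₁ : κ ≤ 1) :
    ‖psiErrorMeanIncrementLaplace lam κ s‖ ≤
      12 * C * ((1 + |s.im|) ^ (ε / 4 - 1) * ((1 + |s.im|) * lam) ^ ((1 - ε) / 2)) := by
  have hnorm : ‖s‖ ≤ 1 + |s.im| := by
    have := norm_le_abs_re_add_abs_im s
    rw [hs, abs_of_pos (by linarith)] at this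
    linarith
  have hs₀ : 0 < ‖s‖ := norm_pos_iff.mpr (ne_zero_of_re_pos (by linarith))
  have hre {r : ℝ} (_ : 0 < r) (hr₁ : r ≤ 1) : (s * r).re ≤ 1 := by
    rw [re_mul_ofReal, hs]
    nlinarith
  have hfactor_lam : ‖cexp (s * lam) - 1‖ ≤ 4 * ((1 + |s.im|) * lam) ^ ((1 - ε) / 2) := by
    refine (norm_exp_sub_one_le_four_mul_rpow (hre hlam hlam₁) (r := (1 - ε) / 2) (by linarith)
      (by linarith)).trans ?_
    rw [norm_mul, norm_real, Real.norm_of_nonneg hlam.le]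
    have : 0 ≤ (1 - ε) / 2 := by linarith
    gcongr
  have hfactor_κ : ‖cexp (s * κ) - 1‖ ≤ 3 * (‖s‖ * κ) := by
    simpa [abs_of_pos hκ] using norm_exp_sub_one_le_three_mul (hre hκ hκ₁)
  have hC := (norm_nonneg _).trans hbound
  rw [psiErrorMeanIncrementLaplace, norm_mul, norm_div, norm_div, norm_mul, norm_real,
    Real.norm_of_nonneg hκ.le]
  calc ‖psiErrorLaplace s‖ / ‖s‖ * (‖cexp (s * lam) - 1‖ * ‖cexp (s * κ) - 1‖ / κ)
      ≤ C * (1 + |s.im|) ^ (ε / 4 - 1) / ‖s‖ *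
        (4 * ((1 + |s.im|) * lam) ^ ((1 - ε) / 2) * (3 * (‖s‖ * κ)) / κ) := by gcongr
    _ = _ := by field_simp; ring

lemma exists_norm_psiErrorMeanIncrementLaplace_sq_le (hRH : RiemannHypothesis) {ε : ℝ}
    (hε : 0 < ε) (hε₁ : ε ≤ 1 / 2) :
    ∃ C, 0 < C ∧ ∀ lam κ : ℝ, 0 < lam → lam ≤ 1 → 0 < κ → κ ≤ 1 → ∀ ξ : ℝ,
      ‖psiErrorMeanIncrementLaplace lam κ (verticalLine (1 / 2 + ε) ξ)‖ ^ 2 ≤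
        C * lam ^ (1 - ε) * (1 + ‖ξ‖) ^ (-(1 + ε / 2)) := by
  obtain ⟨C, hC, hbound⟩ :=
    exists_norm_psiErrorLaplace_le hRH hε (a := ε / 4) (by linarith) (by linarith)
  refine ⟨(12 * C) ^ 2, by positivity, fun lam κ hlam hlam₁ hκ hκ₁ ξ ↦ ?_⟩
  set s := verticalLine (1 / 2 + ε) ξ with hs
  have hre : s.re = 1 / 2 + ε := verticalLine_re _ _
  have ht : 0 < 1 + |s.im| := by positivity
  have him : 1 + ‖ξ‖ ≤ 1 + |s.im| := by
    rw [hs, verticalLine_im, Real.norm_eq_abs, abs_mul, abs_of_pos (by positivity : 0 < 2 * π)]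
    nlinarith [Real.pi_gt_three, abs_nonneg ξ]
  have hexponents : ((1 + |s.im|) ^ (ε / 4 - 1) * ((1 + |s.im|) * lam) ^ ((1 - ε) / 2)) ^ 2 =
      lam ^ (1 - ε) * (1 + |s.im|) ^ (-(1 + ε / 2)) := by
    rw [Real.mul_rpow ht.le hlam.le, mul_pow, mul_pow, ← Real.rpow_mul_natCast ht.le,
      ← Real.rpow_mul_natCast ht.le, ← Real.rpow_mul_natCast hlam.le, ← mul_assoc,
      ← Real.rpow_add ht, mul_comm]
    congr 2 <;> push_cast <;> ring
  calc ‖psiErrorMeanIncrementLaplace lam κ s‖ ^ 2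
      ≤ (12 * C * ((1 + |s.im|) ^ (ε / 4 - 1) * ((1 + |s.im|) * lam) ^ ((1 - ε) / 2))) ^ 2 := by
        gcongr
        exact norm_psiErrorMeanIncrementLaplace_le hε hε₁ hre (hbound s hre.ge (by linarith))
          hlam hlam₁ hκ hκ₁
    _ = (12 * C) ^ 2 * lam ^ (1 - ε) * (1 + |s.im|) ^ (-(1 + ε / 2)) := by
        rw [mul_pow, hexponents, mul_assoc]
    _ ≤ (12 * C) ^ 2 * lam ^ (1 - ε) * (1 + ‖ξ‖) ^ (-(1 + ε / 2)) := by
        gcongr ?_ * ?_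
        exact Real.rpow_le_rpow_of_nonpos (by positivity) him (by linarith)

lemma exists_lintegral_psiErrorMeanIncrement_sq_le (hRH : RiemannHypothesis) {ε : ℝ}
    (hε : 0 < ε) (hε₁ : ε ≤ 1 / 2) :
    ∃ C, 0 < C ∧ ∀ lam κ : ℝ, 0 < lam → lam ≤ 1 → 0 < κ → κ ≤ 1 →
      ∫⁻ u : ℝ, ‖(psiErrorMeanIncrement lam κ u : ℂ) * cexp (-(1 / 2 + ε : ℝ) * u)‖ₑ ^ 2 ≤
        ENNReal.ofReal (C * lam ^ (1 - ε)) := by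
  obtain ⟨C, hC, hbound⟩ := exists_norm_psiErrorMeanIncrementLaplace_sq_le hRH hε hε₁
  have hmajorant : Integrable fun ξ : ℝ ↦ (1 + ‖ξ‖) ^ (-(1 + ε / 2)) :=
    integrable_one_add_norm (by simpa using hε)
  set J := ∫ ξ : ℝ, (1 + ‖ξ‖) ^ (-(1 + ε / 2))
  have : 0 ≤ J := integral_nonneg fun ξ ↦ by positivity
  refine ⟨C * (J + 1), by positivity, fun lam κ hlam hlam₁ hκ hκ₁ ↦ ?_⟩
  have hint := integrable_psiErrorMeanIncrementLaplace hRH (σ := 1 / 2 + ε) (by linarith)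
    (by linarith) lam κ
  have hpointwise := hbound lam κ hlam hlam₁ hκ hκ₁
  have hsq : Integrable fun ξ ↦
      ‖psiErrorMeanIncrementLaplace lam κ (verticalLine (1 / 2 + ε) ξ)‖ ^ 2 :=
    (hmajorant.const_mul (C * lam ^ (1 - ε))).mono' (hint.aestronglyMeasurable.norm.pow 2)
      (.of_forall fun ξ ↦ by simpa using hpointwise ξ)
  have hplancherel := lintegral_enorm_fourierInv_sq hint
    ((memLp_two_iff_integrable_sq_norm hint.aestronglyMeasurable).mpr hsq)
  simp only [fourierInv_psiErrorMeanIncrementLaplace hRH (σ := 1 / 2 + ε) (by linarith)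
    (by linarith)] at hplancherel
  rw [hplancherel]
  simp only [← ofReal_norm, ← ENNReal.ofReal_pow (norm_nonneg _)]
  rw [← ofReal_integral_eq_lintegral_ofReal hsq (.of_forall fun ξ ↦ by positivity)]
  refine ENNReal.ofReal_le_ofReal ?_
  calc _ ≤ ∫ ξ : ℝ, C * lam ^ (1 - ε) * (1 + ‖ξ‖) ^ (-(1 + ε / 2)) :=
        integral_mono hsq (hmajorant.const_mul _) hpointwise
    _ = C * lam ^ (1 - ε) * J := integral_const_mul _ _
    _ ≤ C * lam ^ (1 - ε) * (J + 1) := by gcongr; linarith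
    _ = C * (J + 1) * lam ^ (1 - ε) := by ring

lemma ae_tendsto_psiErrorPrimitive_slope :
    ∀ᵐ u : ℝ, Tendsto (fun κ : ℝ ↦ κ⁻¹ * (psiErrorPrimitive (u + κ) - psiErrorPrimitive u))
      (𝓝[>] 0) (𝓝 (psiError u)) := by
  filter_upwards [LocallyIntegrable.ae_hasDerivAt_integral locallyIntegrable_psiError] with u hu
  have hprimitive : psiErrorPrimitive =
      fun u ↦ psiErrorPrimitive 0 + ∫ t in (0 : ℝ)..u, psiError t := by
    ext u
    rw [← psiErrorPrimitive_sub, add_sub_cancel]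
  have hderiv : HasDerivAt psiErrorPrimitive (psiError u) u := by
    rw [hprimitive]
    exact (hu 0).const_add _
  simpa using hderiv.tendsto_slope_zero_right

lemma ae_tendsto_psiErrorMeanIncrement (lam : ℝ) :
    ∀ᵐ u : ℝ, Tendsto (fun κ ↦ psiErrorMeanIncrement lam κ u) (𝓝[>] 0)
      (𝓝 (psiError (u + lam) - psiError u)) := by
  have hshifted := (measurePreserving_add_right volume lam).quasiMeasurePreserving.ae
    ae_tendsto_psiErrorPrimitive_slope
  filter_upwards [ae_tendsto_psiErrorPrimitive_slope, hshifted] with u hu hu_lam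
  exact hu_lam.sub hu

lemma exists_lintegral_psiError_increment_sq_le (hRH : RiemannHypothesis) {ε : ℝ}
    (hε : 0 < ε) (hε₁ : ε ≤ 1 / 2) :
    ∃ C, 0 < C ∧ ∀ lam : ℝ, 0 < lam → lam ≤ 1 →
      ∫⁻ u : ℝ, ‖((psiError (u + lam) - psiError u : ℝ) : ℂ) * cexp (-(1 / 2 + ε : ℝ) * u)‖ₑ ^ 2
        ≤ ENNReal.ofReal (C * lam ^ (1 - ε)) := by
  obtain ⟨C, hC, hbound⟩ := exists_lintegral_psiErrorMeanIncrement_sq_le hRH hε hε₁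
  refine ⟨C, hC, fun lam hlam hlam₁ ↦ ?_⟩
  have hκ_pos (n : ℕ) : 0 < 1 / ((n : ℝ) + 1) := by positivity
  have hκ_le (n : ℕ) : 1 / ((n : ℝ) + 1) ≤ 1 := by
    rw [div_le_one (by positivity)]
    exact le_add_of_nonneg_left n.cast_nonneg
  have hκ : Tendsto (fun n : ℕ ↦ 1 / ((n : ℝ) + 1)) atTop (𝓝[>] 0) :=
    tendsto_nhdsWithin_iff.mpr ⟨tendsto_one_div_add_atTop_nhds_zero_nat, .of_forall hκ_pos⟩
  set F : ℕ → ℝ → ℂ := fun n u ↦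
    (psiErrorMeanIncrement lam (1 / ((n : ℝ) + 1)) u : ℂ) * cexp (-(1 / 2 + ε : ℝ) * u)
  have hmeas (n : ℕ) : Measurable fun u ↦ ‖F n u‖ₑ ^ 2 := by
    have := continuous_psiErrorMeanIncrement lam (1 / ((n : ℝ) + 1))
    have hcont : Continuous (F n) := by fun_prop
    exact hcont.measurable.enorm.pow_const 2
  have hliminf : ∀ᵐ u : ℝ,
      ‖((psiError (u + lam) - psiError u : ℝ) : ℂ) * cexp (-(1 / 2 + ε : ℝ) * u)‖ₑ ^ 2 =
        liminf (fun n ↦ ‖F n u‖ₑ ^ 2) atTop := by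
    filter_upwards [ae_tendsto_psiErrorMeanIncrement lam] with u hu
    have hlimit := ((continuous_ofReal.tendsto _).comp (hu.comp hκ)).mul_const
      (cexp (-(1 / 2 + ε : ℝ) * u))
    exact (((ENNReal.continuous_pow 2).tendsto _).comp
      ((continuous_enorm.tendsto _).comp hlimit)).liminf_eq.symm
  rw [lintegral_congr_ae hliminf]
  refine (lintegral_liminf_le hmeas).trans (liminf_le_of_le (by isBoundedDefault) fun b hb ↦ ?_)
  obtain ⟨n, hn⟩ := hb.exists
  exact hn.trans (hbound lam _ hlam hlam₁ (hκ_pos n) (hκ_le n))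

end MeanIncrement

section SaffariVaughan

open Set

/-- The error `ψ(x + h) - ψ(x) - h` of the expected number of prime powers, weighted by `Λ`, in
the interval `(x, x + h]`. -/
noncomputable def psiIncrementError (x h : ℝ) : ℝ :=
  Chebyshev.psi (x + h) - Chebyshev.psi x - h

/-- The bound `≤ C X^(2+2ε) θ^(1-ε)` of Saffari and Vaughan for the variance of primes in
intervals `(x, x + θx]`, uniformly in `0 < θ ≤ 1`. -/
def SaffariVaughanBound (C ε : ℝ) : Prop :=
  ∀ X θ : ℝ, 1 ≤ X → 0 < θ → θ ≤ 1 →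
    ∫ x in (1 : ℝ)..X, psiIncrementError x (θ * x) ^ 2 ≤ C * X ^ (2 + 2 * ε) * θ ^ (1 - ε)

lemma measurable_psiIncrementError :
    Measurable fun p : ℝ × ℝ ↦ psiIncrementError p.1 p.2 := by
  have := Chebyshev.psi_mono.measurable
  unfold psiIncrementError
  fun_prop

lemma measurable_psiIncrementError_comp {f : ℝ → ℝ} (hf : Measurable f) :
    Measurable fun x ↦ psiIncrementError x (f x) := by
  have := Chebyshev.psi_mono.measurable
  unfold psiIncrementError
  fun_prop

lemma psiError_add_log_sub_psiError {θ u : ℝ} (hθ : 0 < θ) (hu : 0 < u) :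
    psiError (u + Real.log (1 + θ)) - psiError u =
      psiIncrementError (Real.exp u) (θ * Real.exp u) := by
  have hlog : 0 < Real.log (1 + θ) := Real.log_pos (by linarith)
  rw [psiError_of_pos (by linarith), psiError_of_pos hu, Real.exp_add,
    Real.exp_log (by linarith), psiIncrementError]
  ring_nf

lemma exp_mul_psiIncrementError_sq_le {X ε θ u : ℝ} (hX : 0 < X) (hε : 0 < ε) (hθ : 0 < θ)
    (hu : 0 < u) (huX : u ≤ Real.log X) :
    Real.exp u * psiIncrementError (Real.exp u) (θ * Real.exp u) ^ 2 ≤ X ^ (2 + 2 * ε) *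
      ‖((psiError (u + Real.log (1 + θ)) - psiError u : ℝ) : ℂ) *
        Complex.exp (-(1 / 2 + ε : ℝ) * u)‖ ^ 2 := by
  have hdamping : Real.exp u ≤ X ^ (2 + 2 * ε) * Real.exp (-(1 / 2 + ε) * u) ^ 2 := by
    calc Real.exp u = Real.exp (u * (2 + 2 * ε)) * Real.exp (-(1 / 2 + ε) * u) ^ 2 := by
          rw [← Real.exp_nat_mul, ← Real.exp_add]
          congr 1
          push_cast
          ring
      _ ≤ Real.exp (Real.log X * (2 + 2 * ε)) * Real.exp (-(1 / 2 + ε) * u) ^ 2 := by gcongr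
      _ = _ := by rw [Real.rpow_def_of_pos hX]
  have hre : (-((1 / 2 + ε : ℝ) : ℂ) * u).re = -(1 / 2 + ε) * u := by simp
  rw [psiError_add_log_sub_psiError hθ hu, norm_mul, Complex.norm_exp, hre, Complex.norm_real,
    mul_pow, Real.norm_eq_abs, sq_abs, mul_left_comm, mul_comm]
  gcongr

lemma setLIntegral_Ioc_one_eq_comp_exp {X : ℝ} (hX : 0 < X) (g : ℝ → ENNReal) :
    ∫⁻ x in Ioc 1 X, g x =
      ∫⁻ u in Ioc 0 (Real.log X), ENNReal.ofReal (Real.exp u) * g (Real.exp u) := by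
  have himage : Ioc 1 X = Real.exp '' Ioc 0 (Real.log X) := by
    rw [Real.image_exp_Ioc, Real.exp_zero, Real.exp_log hX]
  rw [himage, lintegral_image_eq_lintegral_abs_deriv_mul measurableSet_Ioc
    (fun x _ ↦ (Real.hasDerivAt_exp x).hasDerivWithinAt) Real.exp_injective.injOn]
  simp only [Real.abs_exp]

theorem exists_saffariVaughanBound (hRH : RiemannHypothesis) {ε : ℝ} (hε : 0 < ε)
    (hε₁ : ε ≤ 1 / 2) : ∃ C, 0 < C ∧ SaffariVaughanBound C ε := by
  obtain ⟨C, hC, hbound⟩ := exists_lintegral_psiError_increment_sq_le hRH hε hε₁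
  refine ⟨C, hC, fun X θ hX hθ hθ₁ ↦ ?_⟩
  have hX₀ : 0 < X := by linarith
  have hlog : 0 < Real.log (1 + θ) := Real.log_pos (by linarith)
  have hlog_le : Real.log (1 + θ) ≤ θ := by
    linarith [Real.log_le_sub_one_of_pos (show 0 < 1 + θ by linarith)]
  have hmeas := (measurable_psiIncrementError_comp (measurable_const_mul θ)).pow_const 2
  rw [intervalIntegral.integral_of_le hX, integral_eq_lintegral_of_nonneg_ae
    (.of_forall fun x ↦ sq_nonneg _) hmeas.aestronglyMeasurable]
  refine ENNReal.toReal_le_of_le_ofReal (by positivity) ?_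
  rw [setLIntegral_Ioc_one_eq_comp_exp hX₀]
  calc _ ≤ ∫⁻ u in Ioc 0 (Real.log X), ENNReal.ofReal (X ^ (2 + 2 * ε)) *
          ‖((psiError (u + Real.log (1 + θ)) - psiError u : ℝ) : ℂ) *
            Complex.exp (-(1 / 2 + ε : ℝ) * u)‖ₑ ^ 2 := by
        refine setLIntegral_mono' measurableSet_Ioc fun u hu ↦ ?_
        rw [← ofReal_norm, ← ENNReal.ofReal_pow (norm_nonneg _),
          ← ENNReal.ofReal_mul (Real.exp_nonneg _), ← ENNReal.ofReal_mul (by positivity)]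
        exact ENNReal.ofReal_le_ofReal
          (exp_mul_psiIncrementError_sq_le hX₀ hε hθ hu.1 hu.2)
    _ ≤ ENNReal.ofReal (X ^ (2 + 2 * ε)) *
          ENNReal.ofReal (C * Real.log (1 + θ) ^ (1 - ε)) := by
        rw [lintegral_const_mul' _ _ ENNReal.ofReal_ne_top]
        gcongr
        exact (setLIntegral_le_lintegral _ _).trans (hbound _ hlog (hlog_le.trans hθ₁))
    _ ≤ ENNReal.ofReal (C * X ^ (2 + 2 * ε) * θ ^ (1 - ε)) := by
        rw [← ENNReal.ofReal_mul (by positivity), mul_left_comm, mul_assoc]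
        have : 0 ≤ 1 - ε := by linarith
        gcongr

end SaffariVaughan

section LogarithmicAverage

open Set

lemma integrable_prod_restrict_of_bounded {α β : Type*} [MeasurableSpace α] [MeasurableSpace β]
    {μ : Measure α} {ν : Measure β} [SFinite μ] [SFinite ν] {s : Set α} {t : Set β}
    (hs : MeasurableSet s) (ht : MeasurableSet t) (hμs : μ s ≠ ⊤) (hνt : ν t ≠ ⊤)
    {f : α × β → ℝ} (hf : Measurable f) {C : ℝ} (hC : ∀ x ∈ s, ∀ y ∈ t, |f (x, y)| ≤ C) :
    Integrable f ((μ.restrict s).prod (ν.restrict t)) := by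
  rw [Measure.prod_restrict]
  refine Measure.integrableOn_of_bounded (M := C) ?_ hf.aestronglyMeasurable ?_
  · rw [Measure.prod_prod]
    exact ENNReal.mul_ne_top hμs hνt
  · filter_upwards [ae_restrict_mem (hs.prod ht)] with p hp
    exact hC p.1 hp.1 p.2 hp.2

lemma intervalIntegrable_const_mul_inv {a b : ℝ} (ha : 0 < a) (hab : a ≤ b) (c : ℝ) :
    IntervalIntegrable (fun d ↦ c * d⁻¹) volume a b := by
  refine (intervalIntegral.intervalIntegrable_inv (fun d hd ↦ ?_) continuousOn_id).const_mul c
  rw [uIcc_of_le hab] at hd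
  exact (ha.trans_le hd.1).ne'

lemma integral_inv_mul_comp_mul_right (f : ℝ → ℝ) (a b : ℝ) {x : ℝ} (hx : x ≠ 0) :
    ∫ d in a..b, d⁻¹ * f (d * x) = ∫ h in a * x..b * x, h⁻¹ * f h := by
  have hintegrand (d : ℝ) : d⁻¹ * f (d * x) = x * ((d * x)⁻¹ * f (d * x)) := by
    rw [mul_inv]
    field_simp
  simp only [hintegrand]
  rw [intervalIntegral.integral_const_mul,
    intervalIntegral.integral_comp_mul_right (fun h ↦ h⁻¹ * f h) hx, smul_eq_mul,
    mul_inv_cancel_left₀ hx]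

/-- The sector of points `(x, h)` with `δ₁ x ≤ h < δ x`, the domain swept out by `h = d x` for
`d ∈ [δ₁, δ)`. -/
def dilationSector (δ₁ δ : ℝ) : Set (ℝ × ℝ) := {p | δ₁ * p.1 ≤ p.2 ∧ p.2 < δ * p.1}

variable {q : ℝ → ℝ → ℝ} {X Y δ₁ δ B E : ℝ}

lemma measurableSet_dilationSector (δ₁ δ : ℝ) : MeasurableSet (dilationSector δ₁ δ) :=
  (measurableSet_le (measurable_fst.const_mul δ₁) measurable_snd).inter
    (measurableSet_lt measurable_snd (measurable_fst.const_mul δ))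

lemma integral_inv_mul_comp_mul_eq_indicator (q : ℝ → ℝ → ℝ) (hY : 0 < Y) (hδ₁ : 0 < δ₁)
    (hδ : δ₁ ≤ δ) {x : ℝ} (hx : x ∈ Ioc Y X) :
    ∫ d in δ₁..δ, d⁻¹ * q x (d * x) = ∫ h in Ioc (δ₁ * Y) (δ * X),
      (dilationSector δ₁ δ).indicator (fun p ↦ p.2⁻¹ * q p.1 p.2) (x, h) := by
  have hx₀ : 0 < x := hY.trans hx.1
  have hδ₀ : 0 < δ := hδ₁.trans_le hδ
  have hsubset : Ico (δ₁ * x) (δ * x) ⊆ Ioc (δ₁ * Y) (δ * X) := fun h hh ↦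
    ⟨(mul_lt_mul_of_pos_left hx.1 hδ₁).trans_le hh.1,
      hh.2.le.trans (mul_le_mul_of_nonneg_left hx.2 hδ₀.le)⟩
  have hsection (h : ℝ) : (dilationSector δ₁ δ).indicator (fun p ↦ p.2⁻¹ * q p.1 p.2) (x, h) =
      (Ico (δ₁ * x) (δ * x)).indicator (fun h ↦ h⁻¹ * q x h) h := rfl
  simp only [hsection]
  rw [integral_inv_mul_comp_mul_right _ _ _ hx₀.ne', intervalIntegral.integral_of_le (by gcongr),
    ← integral_Ico_eq_integral_Ioc, setIntegral_indicator measurableSet_Ico,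
    inter_eq_self_of_subset_right hsubset]

lemma integral_indicator_dilationSector (q : ℝ → ℝ → ℝ) (X Y : ℝ) (hδ₁ : 0 < δ₁) (hδ : 0 < δ)
    (h : ℝ) :
    ∫ x in Ioc Y X, (dilationSector δ₁ δ).indicator (fun p ↦ p.2⁻¹ * q p.1 p.2) (x, h) =
      h⁻¹ * ∫ x in Ioc (max Y (h / δ)) (min X (h / δ₁)), q x h := by
  have hsection (x : ℝ) : (dilationSector δ₁ δ).indicator (fun p ↦ p.2⁻¹ * q p.1 p.2) (x, h) =
      (Ioc (h / δ) (h / δ₁)).indicator (fun x ↦ h⁻¹ * q x h) x := by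
    have hmem : (x, h) ∈ dilationSector δ₁ δ ↔ x ∈ Ioc (h / δ) (h / δ₁) := by
      rw [dilationSector, mem_ofPred_eq, mem_Ioc, div_lt_iff₀' hδ, le_div_iff₀' hδ₁, and_comm]
    simp only [indicator, hmem]
  simp only [hsection]
  rw [setIntegral_indicator measurableSet_Ioc, Ioc_inter_Ioc, integral_const_mul]

lemma integral_inv_mul_integral_comp_mul (hq : Measurable fun p : ℝ × ℝ ↦ q p.1 p.2)
    (hY : 0 < Y) (hYX : Y ≤ X) (hδ₁ : 0 < δ₁) (hδ : δ₁ ≤ δ)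
    (hB : ∀ x ∈ Icc Y X, ∀ h ∈ Icc (δ₁ * Y) (δ * X), |q x h| ≤ B) :
    ∫ d in δ₁..δ, d⁻¹ * ∫ x in Y..X, q x (d * x) = ∫ h in Ioc (δ₁ * Y) (δ * X),
      h⁻¹ * ∫ x in Ioc (max Y (h / δ)) (min X (h / δ₁)), q x h := by
  have hδ₀ : 0 < δ := hδ₁.trans_le hδ
  have : 0 ≤ B := (abs_nonneg _).trans (hB Y ⟨le_rfl, hYX⟩ (δ₁ * Y) ⟨le_rfl, by gcongr⟩)
  have hint_dilated : Integrable (Function.uncurry fun d x ↦ d⁻¹ * q x (d * x))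
      ((volume.restrict (Ioc δ₁ δ)).prod (volume.restrict (Ioc Y X))) := by
    refine integrable_prod_restrict_of_bounded measurableSet_Ioc measurableSet_Ioc
      measure_Ioc_lt_top.ne measure_Ioc_lt_top.ne (C := δ₁⁻¹ * B) ?_ fun d hd x hx ↦ ?_
    · exact measurable_fst.inv.mul
        (hq.comp (by fun_prop : Measurable fun p : ℝ × ℝ ↦ (p.2, p.1 * p.2)))
    · have hd₀ : 0 < d := hδ₁.trans hd.1
      have hqB := hB x (Ioc_subset_Icc_self hx) (d * x)
        ⟨mul_le_mul hd.1.le hx.1.le hY.le hd₀.le, mul_le_mul hd.2 hx.2 (hY.trans hx.1).le hδ₀.le⟩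
      rw [Function.uncurry_apply_pair, abs_mul, abs_inv, abs_of_pos hd₀]
      have := hd.1
      gcongr
  have hint_sector : Integrable (Function.uncurry fun x h ↦
      (dilationSector δ₁ δ).indicator (fun p ↦ p.2⁻¹ * q p.1 p.2) (x, h))
      ((volume.restrict (Ioc Y X)).prod (volume.restrict (Ioc (δ₁ * Y) (δ * X)))) := by
    refine integrable_prod_restrict_of_bounded measurableSet_Ioc measurableSet_Ioc
      measure_Ioc_lt_top.ne measure_Ioc_lt_top.ne (C := (δ₁ * Y)⁻¹ * B)
      ((measurable_snd.inv.mul hq).indicator (measurableSet_dilationSector δ₁ δ))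
      fun x hx h hh ↦ ?_
    rw [Function.uncurry_apply_pair, ← Real.norm_eq_abs]
    refine (norm_indicator_le_norm_self _ _).trans ?_
    have hqB := hB x (Ioc_subset_Icc_self hx) h (Ioc_subset_Icc_self hh)
    rw [Real.norm_eq_abs, abs_mul, abs_inv, abs_of_pos (lt_trans (by positivity) hh.1)]
    have := hh.1
    gcongr
  simp only [intervalIntegral.integral_of_le hδ, intervalIntegral.integral_of_le hYX,
    ← integral_const_mul]
  rw [integral_integral_swap hint_dilated]
  simp only [← intervalIntegral.integral_of_le hδ]
  rw [setIntegral_congr_fun measurableSet_Ioc fun x hx ↦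
    integral_inv_mul_comp_mul_eq_indicator q hY hδ₁ hδ hx, integral_integral_swap hint_sector]
  simp only [integral_indicator_dilationSector q X Y hδ₁ hδ₀, integral_const_mul]

lemma abs_integral_inv_mul_integral_comp_mul_le (hq : Measurable fun p : ℝ × ℝ ↦ q p.1 p.2)
    (hY : 0 < Y) (hYX : Y ≤ X) (hδ₁ : 0 < δ₁) (hδ : δ₁ ≤ δ)
    (hB : ∀ x ∈ Icc Y X, ∀ h ∈ Icc (δ₁ * Y) (δ * X), |q x h| ≤ B)
    (hE : ∀ a b h, Y ≤ a → a ≤ b → b ≤ X → δ₁ * b ≤ h → h ≤ δ * a →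
      |∫ x in a..b, q x h| ≤ E) :
    |∫ d in δ₁..δ, d⁻¹ * ∫ x in Y..X, q x (d * x)| ≤ E * Real.log (δ * X / (δ₁ * Y)) := by
  have hδ₀ : 0 < δ := hδ₁.trans_le hδ
  have hX : 0 < X := hY.trans_le hYX
  have hle : δ₁ * Y ≤ δ * X := by gcongr
  have hE₀ : 0 ≤ E :=
    (abs_nonneg _).trans (hE Y Y (δ₁ * Y) le_rfl le_rfl hYX le_rfl (by gcongr))
  have hsection (h : ℝ) : |∫ x in Ioc (max Y (h / δ)) (min X (h / δ₁)), q x h| ≤ E := by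
    rcases le_or_gt (max Y (h / δ)) (min X (h / δ₁)) with hne | hempty
    · rw [← intervalIntegral.integral_of_le hne]
      exact hE _ _ h (le_max_left _ _) hne (min_le_left _ _)
        ((le_div_iff₀' hδ₁).mp (min_le_right _ _)) ((div_le_iff₀' hδ₀).mp (le_max_right _ _))
    · simpa [Ioc_eq_empty hempty.not_gt] using hE₀
  have hpointwise : ∀ᵐ h ∂volume.restrict (Ioc (δ₁ * Y) (δ * X)),
      ‖h⁻¹ * ∫ x in Ioc (max Y (h / δ)) (min X (h / δ₁)), q x h‖ ≤ E * h⁻¹ := by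
    filter_upwards [ae_restrict_mem measurableSet_Ioc] with h hh
    have hh₀ : 0 < h := lt_trans (by positivity) hh.1
    rw [norm_mul, norm_inv, Real.norm_of_nonneg hh₀.le, mul_comm]
    gcongr
    exact hsection h
  rw [integral_inv_mul_integral_comp_mul hq hY hYX hδ₁ hδ hB, ← Real.norm_eq_abs]
  refine (norm_integral_le_of_norm_le ((intervalIntegrable_iff_integrableOn_Ioc_of_le hle).mp
    (intervalIntegrable_const_mul_inv (by positivity) hle E)) hpointwise).trans_eq ?_
  rw [← intervalIntegral.integral_of_le hle, intervalIntegral.integral_const_mul,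
    integral_inv_of_pos (by positivity) (by positivity)]

lemma measurable_integral_comp_mul (hq : Measurable fun p : ℝ × ℝ ↦ q p.1 p.2) (Y X : ℝ) :
    Measurable fun d ↦ ∫ x in Y..X, q x (d * x) := by
  have hdilated : Measurable fun p : ℝ × ℝ ↦ q p.2 (p.1 * p.2) :=
    hq.comp (by fun_prop : Measurable fun p : ℝ × ℝ ↦ (p.2, p.1 * p.2))
  have hset (s : Set ℝ) : Measurable fun d ↦ ∫ x in s, q x (d * x) :=
    (hdilated.stronglyMeasurable.integral_prod_right' (ν := volume.restrict s)).measurable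
  exact (hset _).sub (hset _)

lemma log_div_mul_abs_le_of_abs_sub_le {G : ℝ → ℝ} (hG : Measurable G) {a b S : ℝ} (ha : 0 < a)
    (hab : a ≤ b) (hS : ∀ d ∈ Icc a b, |G d - G b| ≤ S) :
    Real.log (b / a) * |G b| ≤ |∫ d in a..b, d⁻¹ * G d| + Real.log (b / a) * S := by
  have hb : 0 < b := ha.trans_le hab
  have hpointwise (d : ℝ) (hd : d ∈ Ioc a b) : ‖d⁻¹ * (G d - G b)‖ ≤ S * d⁻¹ := by
    have hd₀ : 0 < d := ha.trans hd.1
    rw [norm_mul, norm_inv, Real.norm_of_nonneg hd₀.le, mul_comm]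
    gcongr
    exact hS d (Ioc_subset_Icc_self hd)
  have hint (c : ℝ) := intervalIntegrable_const_mul_inv ha hab c
  have hint_sub : IntervalIntegrable (fun d ↦ d⁻¹ * (G d - G b)) volume a b := by
    refine (hint S).mono_fun' (by fun_prop) ?_
    rw [uIoc_of_le hab]
    exact (ae_restrict_mem measurableSet_Ioc).mono hpointwise
  have hlog (c : ℝ) : ∫ d in a..b, c * d⁻¹ = Real.log (b / a) * c := by
    rw [intervalIntegral.integral_const_mul, integral_inv_of_pos ha hb, mul_comm]
  have hdiff : |∫ d in a..b, d⁻¹ * (G d - G b)| ≤ Real.log (b / a) * S := by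
    rw [← hlog]
    exact intervalIntegral.norm_integral_le_of_norm_le hab (.of_forall hpointwise) (hint S)
  have hsplit : Real.log (b / a) * G b =
      (∫ d in a..b, d⁻¹ * G d) - ∫ d in a..b, d⁻¹ * (G d - G b) := by
    rw [← hlog, eq_sub_iff_add_eq, ← intervalIntegral.integral_add (hint _) hint_sub]
    congr 1 with d
    ring
  have hlog₀ : 0 ≤ Real.log (b / a) := Real.log_nonneg ((one_le_div ha).mpr hab)
  calc Real.log (b / a) * |G b| = |Real.log (b / a) * G b| := by
        rw [abs_mul, abs_of_nonneg hlog₀]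
    _ ≤ _ := by
        rw [hsplit]
        exact (abs_sub _ _).trans (by gcongr)

lemma abs_le_div_add_of_abs_integral_inv_mul_le {G : ℝ → ℝ} (hG : Measurable G) {δ η A S : ℝ}
    (hδ : 0 < δ) (hη : 0 < η) (hη₁ : η < 1)
    (hA : |∫ d in (1 - η) * δ..δ, d⁻¹ * G d| ≤ A)
    (hS : ∀ d ∈ Icc ((1 - η) * δ) δ, |G d - G δ| ≤ S) : |G δ| ≤ A / η + S := by
  have hA₀ : 0 ≤ A := (abs_nonneg _).trans hA
  have hη₀ : 0 < 1 - η := by linarith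
  have hmean := log_div_mul_abs_le_of_abs_sub_le hG (mul_pos hη₀ hδ) (by nlinarith) hS
  have hη_le : η ≤ Real.log (δ / ((1 - η) * δ)) := by
    rw [div_mul_cancel_right₀ hδ.ne', Real.log_inv]
    linarith [Real.log_le_sub_one_of_pos hη₀]
  set L := Real.log (δ / ((1 - η) * δ))
  have hL : 0 < L := hη.trans_le hη_le
  calc |G δ| ≤ A / L + S := by
        rw [← sub_le_iff_le_add, le_div_iff₀ hL]
        linarith
    _ ≤ A / η + S := by gcongr

end LogarithmicAverage

section PsiVariance

open Set

variable {K a b d h x X Y : ℝ}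

lemma abs_psiIncrementError_le (x : ℝ) (hh : 0 ≤ h) :
    |psiIncrementError x h| ≤ Chebyshev.psi (x + h) + h := by
  have hmono : Chebyshev.psi x ≤ Chebyshev.psi (x + h) := Chebyshev.psi_mono (by linarith)
  have hnonneg := Chebyshev.psi_nonneg x
  rw [psiIncrementError, abs_le]
  constructor <;> linarith

lemma psiIncrementError_sub_psiIncrementError (x h k : ℝ) :
    psiIncrementError x h - psiIncrementError x k = psiIncrementError (x + k) (h - k) := by
  simp only [psiIncrementError, add_add_sub_cancel]
  ring

lemma intervalIntegrable_psiIncrementError_sq {f : ℝ → ℝ} {M : ℝ} (hf : Measurable f)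
    (hab : a ≤ b) (hfM : ∀ x ∈ Icc a b, f x ∈ Icc 0 M) :
    IntervalIntegrable (fun x ↦ psiIncrementError x (f x) ^ 2) volume a b := by
  rw [intervalIntegrable_iff_integrableOn_Ioc_of_le hab]
  refine Measure.integrableOn_of_bounded (M := (Chebyshev.psi (b + M) + M) ^ 2)
    measure_Ioc_lt_top.ne
    ((measurable_psiIncrementError_comp hf).pow_const 2).aestronglyMeasurable ?_
  filter_upwards [ae_restrict_mem measurableSet_Ioc] with x hx
  obtain ⟨hf₀, hf_le⟩ := hfM x (Ioc_subset_Icc_self hx)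
  have hpsi : Chebyshev.psi (x + f x) ≤ Chebyshev.psi (b + M) :=
    Chebyshev.psi_mono (by linarith [hx.2])
  rw [norm_pow, Real.norm_eq_abs]
  gcongr
  linarith [abs_psiIncrementError_le x hf₀]

lemma intervalIntegrable_psiIncrementError_const_sq (hab : a ≤ b) (hh : 0 ≤ h) :
    IntervalIntegrable (fun x ↦ psiIncrementError x h ^ 2) volume a b :=
  intervalIntegrable_psiIncrementError_sq measurable_const hab fun _ _ ↦ ⟨hh, le_rfl⟩

lemma intervalIntegrable_psiIncrementError_mul_sq (ha : 0 ≤ a) (hab : a ≤ b) (hd : 0 ≤ d) :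
    IntervalIntegrable (fun x ↦ psiIncrementError x (d * x) ^ 2) volume a b :=
  intervalIntegrable_psiIncrementError_sq (measurable_const_mul d) hab fun _ hx ↦
    ⟨mul_nonneg hd (ha.trans hx.1), mul_le_mul_of_nonneg_left hx.2 hd⟩

/-- The difference between the variance of primes in intervals `(t, t + h]`, `1 ≤ t ≤ x`, and its
expected main term; in the application `K = γ₀ + log 2π`. -/
noncomputable def psiVarianceDefect (K x h : ℝ) : ℝ :=
  (∫ t in (1 : ℝ)..x, psiIncrementError t h ^ 2) - h * x * (Real.log (x / h) - K)

/-- The density of `x ↦ psiVarianceDefect K x h`. -/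
noncomputable def psiVarianceDefectDensity (K x h : ℝ) : ℝ :=
  psiIncrementError x h ^ 2 - h * (Real.log (x / h) - K + 1)

/-- The difference between the variance of primes in intervals `(x, x + dx]`, `Y ≤ x ≤ X`, and
its expected main term; in the application `K = γ₀ + log 2π`. -/
noncomputable def relPsiVarianceDefect (K Y X d : ℝ) : ℝ :=
  (∫ x in Y..X, psiIncrementError x (d * x) ^ 2) -
    1 / 2 * d * (X ^ 2 - Y ^ 2) * (Real.log (1 / d) + (1 - K))

lemma measurable_psiVarianceDefectDensity (K : ℝ) :
    Measurable fun p : ℝ × ℝ ↦ psiVarianceDefectDensity K p.1 p.2 := by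
  have := measurable_psiIncrementError
  unfold psiVarianceDefectDensity
  fun_prop

lemma hasDerivAt_mul_log_div_sub (K : ℝ) (hx : x ≠ 0) (hh : h ≠ 0) :
    HasDerivAt (fun x ↦ h * x * (Real.log (x / h) - K)) (h * (Real.log (x / h) - K + 1)) x := by
  have hlog : HasDerivAt (fun x ↦ Real.log (x / h) - K) (1 / h / (x / h)) x :=
    (((hasDerivAt_id x).div_const h).log (div_ne_zero hx hh)).sub_const K
  refine (((hasDerivAt_id x).const_mul h).mul hlog).congr_deriv ?_
  simp only [id]
  field_simp

lemma continuousOn_mul_log_div_sub (K : ℝ) (ha : 0 < a) (hY : 0 < Y) :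
    ContinuousOn (fun p : ℝ × ℝ ↦ p.2 * (Real.log (p.1 / p.2) - K + 1))
      (Icc Y X ×ˢ Icc a b) := by
  have hsnd (p : ℝ × ℝ) (hp : p ∈ Icc Y X ×ˢ Icc a b) : p.2 ≠ 0 := (ha.trans_le hp.2.1).ne'
  have hdiv (p : ℝ × ℝ) (hp : p ∈ Icc Y X ×ˢ Icc a b) : p.1 / p.2 ≠ 0 :=
    div_ne_zero (hY.trans_le hp.1.1).ne' (hsnd p hp)
  fun_prop (disch := assumption)

lemma exists_abs_psiVarianceDefectDensity_le (K X b : ℝ) (ha : 0 < a) (hY : 0 < Y) :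
    ∃ B, ∀ x ∈ Icc Y X, ∀ h ∈ Icc a b, |psiVarianceDefectDensity K x h| ≤ B := by
  obtain ⟨M, hM⟩ := (isCompact_Icc.prod isCompact_Icc).exists_bound_of_continuousOn
    (continuousOn_mul_log_div_sub (X := X) (b := b) K ha hY)
  refine ⟨(Chebyshev.psi (X + b) + b) ^ 2 + M, fun x hx h hh ↦
    (abs_sub _ _).trans (add_le_add ?_ (hM (x, h) ⟨hx, hh⟩))⟩
  have hpsi : Chebyshev.psi (x + h) ≤ Chebyshev.psi (X + b) :=
    Chebyshev.psi_mono (add_le_add hx.2 hh.2)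
  rw [abs_pow]
  gcongr
  linarith [abs_psiIncrementError_le x (ha.le.trans hh.1), hh.2]

lemma integral_psiVarianceDefectDensity (K : ℝ) (ha : 1 ≤ a) (hab : a ≤ b) (hh : 0 < h) :
    ∫ x in a..b, psiVarianceDefectDensity K x h =
      psiVarianceDefect K b h - psiVarianceDefect K a h := by
  have ha₀ : 0 < a := zero_lt_one.trans_le ha
  have hne (x : ℝ) (hx : x ∈ uIcc a b) : x ≠ 0 := by
    rw [uIcc_of_le hab] at hx
    exact (ha₀.trans_le hx.1).ne'
  have hmain : IntervalIntegrable (fun x ↦ h * (Real.log (x / h) - K + 1)) volume a b := by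
    have hdiv (x : ℝ) (hx : x ∈ uIcc a b) : x / h ≠ 0 := div_ne_zero (hne x hx) hh.ne'
    exact ContinuousOn.intervalIntegrable (by fun_prop (disch := assumption))
  have hmain_eval := intervalIntegral.integral_eq_sub_of_hasDerivAt
    (fun x hx ↦ hasDerivAt_mul_log_div_sub K (hne x hx) hh.ne') hmain
  have hvariance := intervalIntegral.integral_add_adjacent_intervals
    (intervalIntegrable_psiIncrementError_const_sq ha hh.le)
    (intervalIntegrable_psiIncrementError_const_sq hab hh.le)
  simp only [psiVarianceDefectDensity, psiVarianceDefect]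
  rw [intervalIntegral.integral_sub (intervalIntegrable_psiIncrementError_const_sq hab hh.le)
    hmain, hmain_eval, ← hvariance]
  ring

lemma integral_psiVarianceDefectDensity_comp_mul (K : ℝ) (hY : 0 < Y) (hYX : Y ≤ X)
    (hd : 0 ≤ d) :
    ∫ x in Y..X, psiVarianceDefectDensity K x (d * x) = relPsiVarianceDefect K Y X d := by
  have hdensity : EqOn (fun x ↦ psiVarianceDefectDensity K x (d * x))
      (fun x ↦ psiIncrementError x (d * x) ^ 2 - d * (Real.log (1 / d) + (1 - K)) * x)
      (uIcc Y X) := fun x hx ↦ by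
    rw [uIcc_of_le hYX] at hx
    have hdiv : x / (d * x) = 1 / d := by
      rw [div_mul_cancel_right₀ (hY.trans_le hx.1).ne', one_div]
    simp only [psiVarianceDefectDensity, hdiv]
    ring
  rw [intervalIntegral.integral_congr hdensity, intervalIntegral.integral_sub
    (intervalIntegrable_psiIncrementError_mul_sq hY.le hYX hd)
    (Continuous.intervalIntegrable (by fun_prop) _ _), intervalIntegral.integral_const_mul,
    integral_id, relPsiVarianceDefect]
  ring

end PsiVariance

section RelativeVariance

open Set

variable {C ε K D c d δ η θ X Y : ℝ}

lemma abs_sub_sq_sub_sq_le {τ : ℝ} (hτ : 0 < τ) (hτ₁ : τ ≤ 1) (a b : ℝ) :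
    |(a - b) ^ 2 - a ^ 2| ≤ τ * a ^ 2 + 2 / τ * b ^ 2 := by
  have hcross : 2 * |a * b| ≤ τ * a ^ 2 + b ^ 2 / τ := by
    have hsq : τ * a ^ 2 + b ^ 2 / τ - 2 * |a * b| = τ * (|a| - |b| / τ) ^ 2 := by
      rw [abs_mul, ← sq_abs a, ← sq_abs b]
      field_simp
      ring
    have : 0 ≤ τ * (|a| - |b| / τ) ^ 2 := by positivity
    linarith
  have hsq_le : b ^ 2 ≤ b ^ 2 / τ := le_div_self (sq_nonneg b) hτ hτ₁
  have hdouble : 2 / τ * b ^ 2 = b ^ 2 / τ + b ^ 2 / τ := by ring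
  rw [abs_le]
  constructor <;> nlinarith [le_abs_self (a * b), neg_abs_le (a * b), sq_nonneg b]

namespace SaffariVaughanBound

lemma nonneg (hSV : SaffariVaughanBound C ε) : 0 ≤ C := by
  simpa using hSV 1 1 le_rfl one_pos le_rfl

lemma integral_le (hSV : SaffariVaughanBound C ε) (hY : 1 ≤ Y) (hYX : Y ≤ X) (hθ : 0 < θ)
    (hθ₁ : θ ≤ 1) :
    ∫ x in Y..X, psiIncrementError x (θ * x) ^ 2 ≤ C * X ^ (2 + 2 * ε) * θ ^ (1 - ε) :=
  (intervalIntegral.integral_mono_interval hY hYX le_rfl (.of_forall fun _ ↦ sq_nonneg _)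
    (intervalIntegrable_psiIncrementError_mul_sq zero_le_one (hY.trans hYX) hθ.le)).trans
    (hSV X θ (hY.trans hYX) hθ hθ₁)

lemma integral_comp_mul_right_le (hSV : SaffariVaughanBound C ε) (hε : ε ≤ 1 / 2) {r : ℝ}
    (hr : 1 ≤ r) (hr₂ : r ≤ 2) (hY : 1 ≤ Y) (hYX : Y ≤ X) (hθ : 0 < θ) (hθ₁ : θ ≤ 1) :
    ∫ x in Y..X, psiIncrementError (x * r) (θ * (x * r)) ^ 2 ≤
      8 * (C * X ^ (2 + 2 * ε) * θ ^ (1 - ε)) := by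
  have hC := hSV.nonneg
  have hX₀ : 0 < X := by linarith
  have htwo : (2 * X) ^ (2 + 2 * ε) ≤ 8 * X ^ (2 + 2 * ε) := by
    rw [Real.mul_rpow zero_le_two hX₀.le]
    gcongr
    calc (2 : ℝ) ^ (2 + 2 * ε) ≤ 2 ^ (3 : ℝ) :=
          Real.rpow_le_rpow_of_exponent_le one_le_two (by linarith)
      _ = 8 := by norm_num
  have hnonneg : 0 ≤ ∫ x in (1 : ℝ)..2 * X, psiIncrementError x (θ * x) ^ 2 :=
    intervalIntegral.integral_nonneg (by linarith) fun _ _ ↦ sq_nonneg _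
  have hmono : ∫ x in Y * r..X * r, psiIncrementError x (θ * x) ^ 2 ≤
      ∫ x in (1 : ℝ)..2 * X, psiIncrementError x (θ * x) ^ 2 :=
    intervalIntegral.integral_mono_interval (by nlinarith) (by gcongr) (by nlinarith)
      (.of_forall fun _ ↦ sq_nonneg _)
      (intervalIntegrable_psiIncrementError_mul_sq zero_le_one (by linarith) hθ.le)
  rw [intervalIntegral.integral_comp_mul_right (fun x ↦ psiIncrementError x (θ * x) ^ 2)
    (by linarith : r ≠ 0), smul_eq_mul]
  calc _ ≤ r⁻¹ * ∫ x in (1 : ℝ)..2 * X, psiIncrementError x (θ * x) ^ 2 := by gcongr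
    _ ≤ ∫ x in (1 : ℝ)..2 * X, psiIncrementError x (θ * x) ^ 2 :=
        mul_le_of_le_one_left hnonneg (inv_le_one_of_one_le₀ hr)
    _ ≤ C * (2 * X) ^ (2 + 2 * ε) * θ ^ (1 - ε) := hSV (2 * X) θ (by linarith) hθ hθ₁
    _ ≤ C * (8 * X ^ (2 + 2 * ε)) * θ ^ (1 - ε) := by gcongr
    _ = _ := by ring

lemma abs_integral_sq_sub_le {τ : ℝ} (hSV : SaffariVaughanBound C ε) (hε : ε ≤ 1 / 2)
    (hτ : 0 < τ) (hτ₁ : τ ≤ 1) (hY : 1 ≤ Y) (hYX : Y ≤ X) (hd : 0 ≤ d) (hdδ : d < δ)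
    (hδ₁ : δ ≤ 1) :
    |(∫ x in Y..X, psiIncrementError x (d * x) ^ 2) -
        ∫ x in Y..X, psiIncrementError x (δ * x) ^ 2| ≤
      C * X ^ (2 + 2 * ε) *
        (τ * δ ^ (1 - ε) + 16 / τ * ((δ - d) / (1 + d)) ^ (1 - ε)) := by
  have hY₀ : 0 ≤ Y := by linarith
  have hδ : 0 < δ := hd.trans_lt hdδ
  have hd₁ : 1 + d ≠ 0 := by linarith
  set θ := (δ - d) / (1 + d) with hθ_def
  have hθ : 0 < θ := div_pos (by linarith) (by linarith)
  have hθ₁ : θ ≤ 1 := (div_le_one (by linarith)).mpr (by linarith)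
  have hincrement (x : ℝ) : psiIncrementError x (d * x) =
      psiIncrementError x (δ * x) - psiIncrementError (x * (1 + d)) (θ * (x * (1 + d))) := by
    have hlength : θ * (x * (1 + d)) = δ * x - d * x := by
      rw [hθ_def]
      field_simp
    rw [hlength, show x * (1 + d) = x + d * x by ring,
      ← psiIncrementError_sub_psiIncrementError, sub_sub_cancel]
  have hint_d := intervalIntegrable_psiIncrementError_mul_sq hY₀ hYX hd
  have hint_δ := intervalIntegrable_psiIncrementError_mul_sq hY₀ hYX hδ.le
  have hint_θ : IntervalIntegrable
      (fun x ↦ psiIncrementError (x * (1 + d)) (θ * (x * (1 + d))) ^ 2) volume Y X := by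
    simpa only [mul_div_cancel_right₀ _ hd₁] using (intervalIntegrable_psiIncrementError_mul_sq
      (a := Y * (1 + d)) (b := X * (1 + d)) (by positivity) (by gcongr) hθ.le).comp_mul_right
      (c := 1 + d)
  rw [← intervalIntegral.integral_sub hint_d hint_δ]
  calc _ ≤ ∫ x in Y..X, (τ * psiIncrementError x (δ * x) ^ 2 +
          2 / τ * psiIncrementError (x * (1 + d)) (θ * (x * (1 + d))) ^ 2) := by
        rw [← Real.norm_eq_abs]
        refine intervalIntegral.norm_integral_le_of_norm_le hYX (.of_forall fun x _ ↦ ?_)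
          ((hint_δ.const_mul τ).add (hint_θ.const_mul (2 / τ)))
        rw [hincrement x, Real.norm_eq_abs]
        exact abs_sub_sq_sub_sq_le hτ hτ₁ _ _
    _ = τ * (∫ x in Y..X, psiIncrementError x (δ * x) ^ 2) +
          2 / τ * ∫ x in Y..X, psiIncrementError (x * (1 + d)) (θ * (x * (1 + d))) ^ 2 := by
        rw [intervalIntegral.integral_add (hint_δ.const_mul τ) (hint_θ.const_mul (2 / τ)),
          intervalIntegral.integral_const_mul, intervalIntegral.integral_const_mul]
    _ ≤ τ * (C * X ^ (2 + 2 * ε) * δ ^ (1 - ε)) +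
          2 / τ * (8 * (C * X ^ (2 + 2 * ε) * θ ^ (1 - ε))) := by
        gcongr
        · exact hSV.integral_le hY hYX hδ hδ₁
        · exact hSV.integral_comp_mul_right_le hε (by linarith) (by linarith) hY hYX hθ hθ₁
    _ = _ := by ring

lemma abs_integral_sq_sub_le_of_mem_Icc (hSV : SaffariVaughanBound C ε) (hε : ε ≤ 1 / 2)
    (hY : 1 ≤ Y) (hYX : Y ≤ X) (hδ : 0 < δ) (hδ₁ : δ ≤ 1) (hη : 0 < η) (hη₁ : η ≤ 1)
    (hd : d ∈ Icc ((1 - η) * δ) δ) :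
    |(∫ x in Y..X, psiIncrementError x (d * x) ^ 2) -
        ∫ x in Y..X, psiIncrementError x (δ * x) ^ 2| ≤
      17 * C * X ^ (2 + 2 * ε) * δ ^ (1 - ε) * η ^ ((1 - ε) / 2) := by
  have hC := hSV.nonneg
  have hX₀ : 0 ≤ X := by linarith
  have hd₀ : 0 ≤ d := (mul_nonneg (by linarith) hδ.le).trans hd.1
  rcases hd.2.eq_or_lt with rfl | hlt
  · rw [sub_self, abs_zero]
    positivity
  set τ := η ^ ((1 - ε) / 2) with hτ_def
  have hτ : 0 < τ := by positivity
  have hτ₁ : τ ≤ 1 := Real.rpow_le_one hη.le hη₁ (by linarith)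
  have hτ_sq : τ * τ = η ^ (1 - ε) := by
    rw [hτ_def, ← Real.rpow_add hη, add_halves]
  have hθ : (δ - d) / (1 + d) ≤ η * δ := by
    rw [div_le_iff₀ (by linarith)]
    nlinarith [hd.1, mul_pos hη hδ]
  have hθ_pow : ((δ - d) / (1 + d)) ^ (1 - ε) ≤ τ * τ * δ ^ (1 - ε) := by
    rw [hτ_sq, ← Real.mul_rpow hη.le hδ.le]
    exact Real.rpow_le_rpow (div_nonneg (by linarith) (by linarith)) hθ (by linarith)
  calc _ ≤ C * X ^ (2 + 2 * ε) *
          (τ * δ ^ (1 - ε) + 16 / τ * ((δ - d) / (1 + d)) ^ (1 - ε)) :=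
        hSV.abs_integral_sq_sub_le hε hτ hτ₁ hY hYX hd₀ hlt hδ₁
    _ ≤ C * X ^ (2 + 2 * ε) * (τ * δ ^ (1 - ε) + 16 / τ * (τ * τ * δ ^ (1 - ε))) := by gcongr
    _ = _ := by
        field_simp
        ring

end SaffariVaughanBound

lemma abs_mul_log_one_div_add_sub_le (κ : ℝ) (hd₀ : 0 < d) (hdδ : d ≤ δ) (hδ₁ : δ ≤ 1) :
    |d * (Real.log (1 / d) + κ) - δ * (Real.log (1 / δ) + κ)| ≤
      (δ - d) * (Real.log (1 / δ) + |κ| + 1) := by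
  have hδ : 0 < δ := hd₀.trans_le hdδ
  have hlog_δ : 0 ≤ Real.log (1 / δ) := Real.log_nonneg (by rwa [le_div_iff₀ hδ, one_mul])
  have hlog_ratio : 0 ≤ Real.log (δ / d) := Real.log_nonneg ((one_le_div hd₀).mpr hdδ)
  have hlog_d : Real.log (1 / d) = Real.log (1 / δ) + Real.log (δ / d) := by
    rw [← Real.log_mul (by positivity) (by positivity)]
    field_simp
  have hratio : d * Real.log (δ / d) ≤ δ - d := by
    calc d * Real.log (δ / d) ≤ d * (δ / d - 1) := by
          gcongr
          exact Real.log_le_sub_one_of_pos (by positivity)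
      _ = δ - d := by field_simp
  calc _ = |d * Real.log (δ / d) - (δ - d) * (Real.log (1 / δ) + κ)| := by
        rw [hlog_d]
        ring_nf
    _ ≤ |d * Real.log (δ / d)| + |(δ - d) * (Real.log (1 / δ) + κ)| := abs_sub _ _
    _ ≤ (δ - d) + (δ - d) * (Real.log (1 / δ) + |κ|) := by
        rw [abs_of_nonneg (by positivity), abs_mul, abs_of_nonneg (by linarith : 0 ≤ δ - d)]
        gcongr
        exact (abs_add_le _ _).trans_eq (by rw [abs_of_nonneg hlog_δ])
    _ = _ := by ring

lemma abs_relPsiVarianceDefect_sub_le (K : ℝ) (hSV : SaffariVaughanBound C ε) (hε : ε ≤ 1 / 2)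
    (hY : 1 ≤ Y) (hYX : Y ≤ X) (hδ : 0 < δ) (hδ₁ : δ ≤ 1) (hη : 0 < η) (hη₁ : η < 1)
    (hd : d ∈ Icc ((1 - η) * δ) δ) :
    |relPsiVarianceDefect K Y X d - relPsiVarianceDefect K Y X δ| ≤
      17 * C * X ^ (2 + 2 * ε) * δ ^ (1 - ε) * η ^ ((1 - ε) / 2) +
        X ^ 2 * η * (δ * (Real.log (1 / δ) + |1 - K| + 1)) := by
  have hd₀ : 0 < d := (mul_pos (by linarith) hδ).trans_le hd.1
  have hlog_δ : 0 ≤ Real.log (1 / δ) := Real.log_nonneg (by rwa [le_div_iff₀ hδ, one_mul])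
  have hsq : 0 ≤ X ^ 2 - Y ^ 2 := by nlinarith
  have hmain : |1 / 2 * d * (X ^ 2 - Y ^ 2) * (Real.log (1 / d) + (1 - K)) -
      1 / 2 * δ * (X ^ 2 - Y ^ 2) * (Real.log (1 / δ) + (1 - K))| ≤
      X ^ 2 * η * (δ * (Real.log (1 / δ) + |1 - K| + 1)) := by
    calc _ = |1 / 2 * (X ^ 2 - Y ^ 2) * (d * (Real.log (1 / d) + (1 - K)) -
            δ * (Real.log (1 / δ) + (1 - K)))| := by ring_nf
      _ = 1 / 2 * (X ^ 2 - Y ^ 2) * |d * (Real.log (1 / d) + (1 - K)) -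
            δ * (Real.log (1 / δ) + (1 - K))| := by
          rw [abs_mul, abs_of_nonneg (by positivity : 0 ≤ 1 / 2 * (X ^ 2 - Y ^ 2))]
      _ ≤ 1 / 2 * (X ^ 2 - Y ^ 2) * ((δ - d) * (Real.log (1 / δ) + |1 - K| + 1)) := by
          gcongr
          exact abs_mul_log_one_div_add_sub_le _ hd₀ hd.2 hδ₁
      _ ≤ X ^ 2 * ((η * δ) * (Real.log (1 / δ) + |1 - K| + 1)) := by
          gcongr
          · exact mul_nonneg (by linarith [hd.2]) (by positivity)
          · nlinarith [sq_nonneg X, sq_nonneg Y]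
          · linarith [hd.1]
      _ = _ := by ring
  rw [relPsiVarianceDefect, relPsiVarianceDefect, sub_sub_sub_comm]
  exact (abs_sub _ _).trans (add_le_add
    (hSV.abs_integral_sq_sub_le_of_mem_Icc hε hY hYX hδ hδ₁ hη hη₁.le hd) hmain)

lemma mul_mul_rpow_le {h y : ℝ} (hD : 0 ≤ D) (hc : c ≤ 2) (hδ : 0 ≤ δ) (hy : 0 < y)
    (hyX : y ≤ X) (hh : h ≤ δ * y) : D * h * y ^ (1 - c) ≤ D * δ * X ^ (2 - c) := by
  calc D * h * y ^ (1 - c) ≤ D * (δ * y) * y ^ (1 - c) := by gcongr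
    _ = D * δ * y ^ (2 - c) := by
        rw [show 2 - c = 1 + (1 - c) by ring, Real.rpow_add hy, Real.rpow_one]
        ring
    _ ≤ D * δ * X ^ (2 - c) := by
        have : 0 ≤ 2 - c := by linarith
        gcongr

lemma abs_integral_inv_mul_integral_psiVarianceDefectDensity_le (hD : 0 ≤ D) (hc : c ≤ 2)
    (hY : 1 ≤ Y) (hYX : Y ≤ X) (hδ : 0 < δ) (hη : 0 ≤ η) (hη₁ : η ≤ 1 / 2)
    (hdefect : ∀ x h, Y ≤ x → x ≤ X → (1 - η) * δ * x ≤ h → h ≤ δ * x →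
      |psiVarianceDefect K x h| ≤ D * h * x ^ (1 - c)) :
    |∫ d in (1 - η) * δ..δ, d⁻¹ * ∫ x in Y..X, psiVarianceDefectDensity K x (d * x)| ≤
      2 * D * δ * X ^ (2 - c) * Real.log (2 * X) := by
  have hY₀ : 0 < Y := by linarith
  have hX₀ : 0 < X := by linarith
  have hδ_lower : 0 < (1 - η) * δ := mul_pos (by linarith) hδ
  have hδ_le : (1 - η) * δ ≤ δ := mul_le_of_le_one_left hδ.le (by linarith)
  have hlog : Real.log (δ * X / ((1 - η) * δ * Y)) ≤ Real.log (2 * X) := by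
    refine Real.log_le_log (by positivity) ?_
    rw [div_le_iff₀ (by positivity)]
    have hhalf : 1 / 2 ≤ (1 - η) * Y := by nlinarith
    nlinarith [mul_pos hδ hX₀]
  obtain ⟨B, hB⟩ := exists_abs_psiVarianceDefectDensity_le K X (δ * X)
    (mul_pos hδ_lower hY₀) hY₀
  refine (abs_integral_inv_mul_integral_comp_mul_le (measurable_psiVarianceDefectDensity K) hY₀ hYX
    hδ_lower hδ_le hB (E := 2 * D * δ * X ^ (2 - c)) fun a b h hYa hab hbX hbh hha ↦ ?_).trans
    (by gcongr)
  have ha₀ : 0 < a := by linarith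
  have hb₀ : 0 < b := by linarith
  have hhb : h ≤ δ * b := hha.trans (by gcongr)
  rw [integral_psiVarianceDefectDensity K (by linarith) hab ((mul_pos hδ_lower hb₀).trans_le hbh)]
  have hdefect_a := (hdefect a h hYa (hab.trans hbX) (le_trans (by gcongr) hbh) hha).trans
    (mul_mul_rpow_le hD hc hδ.le ha₀ (hab.trans hbX) hha)
  have hdefect_b := (hdefect b h (hYa.trans hab) hbX hbh hhb).trans
    (mul_mul_rpow_le hD hc hδ.le hb₀ hbX hhb)
  linarith [abs_sub (psiVarianceDefect K b h) (psiVarianceDefect K a h)]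

theorem abs_relPsiVarianceDefect_le (hSV : SaffariVaughanBound C ε) (hε : ε ≤ 1 / 2)
    (hD : 0 ≤ D) (hc : c ≤ 2) (hY : 1 ≤ Y) (hYX : Y ≤ X) (hδ : 0 < δ) (hδ₁ : δ ≤ 1)
    (hη : 0 < η) (hη₁ : η ≤ 1 / 2)
    (hdefect : ∀ x h, Y ≤ x → x ≤ X → (1 - η) * δ * x ≤ h → h ≤ δ * x →
      |psiVarianceDefect K x h| ≤ D * h * x ^ (1 - c)) :
    |relPsiVarianceDefect K Y X δ| ≤
      2 * D * δ * X ^ (2 - c) * Real.log (2 * X) / η +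
        (17 * C * X ^ (2 + 2 * ε) * δ ^ (1 - ε) * η ^ ((1 - ε) / 2) +
          X ^ 2 * η * (δ * (Real.log (1 / δ) + |1 - K| + 1))) := by
  have hY₀ : 0 < Y := by linarith
  have hintegral {d : ℝ} (hd : d ∈ Icc ((1 - η) * δ) δ) :
      ∫ x in Y..X, psiVarianceDefectDensity K x (d * x) = relPsiVarianceDefect K Y X d :=
    integral_psiVarianceDefectDensity_comp_mul K hY₀ hYX
      ((mul_nonneg (by linarith) hδ.le).trans hd.1)
  have hδ_mem : δ ∈ Icc ((1 - η) * δ) δ :=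
    ⟨mul_le_of_le_one_left hδ.le (by linarith), le_rfl⟩
  rw [← hintegral hδ_mem]
  refine abs_le_div_add_of_abs_integral_inv_mul_le
    (measurable_integral_comp_mul (measurable_psiVarianceDefectDensity K) Y X) hδ hη
    (by linarith)
    (abs_integral_inv_mul_integral_psiVarianceDefectDensity_le hD hc hY hYX hδ hη.le hη₁
      hdefect)
    fun d hd ↦ ?_
  rw [hintegral hd, hintegral hδ_mem]
  exact abs_relPsiVarianceDefect_sub_le K hSV hε hY hYX hδ hδ₁ hη (by linarith) hd

end RelativeVariance

section PowerComparison

variable {B ε δ X : ℝ}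

lemma rpow_mul_le_rpow_neg {s : ℝ} (hX : 0 ≤ X) (hδ : 0 < δ) (hδX : δ ≤ X ^ (-B))
    (hs : 0 ≤ s) : X ^ (B * s) ≤ δ ^ (-s) := by
  simpa only [← Real.rpow_mul hX, neg_mul_neg] using
    Real.rpow_le_rpow_of_nonpos hδ hδX (neg_nonpos.mpr hs)

lemma rpow_mul_rpow_le_rpow_one_sub (hX : 0 ≤ X) (hδ : 0 < δ) (hδ₁ : δ ≤ 1)
    (hδX : δ ≤ X ^ (-B)) (hB : B ≤ 1) (hε : 0 ≤ ε) :
    δ ^ (1 - B * ε / 4) * X ^ (3 * (B * ε / 4)) ≤ δ ^ (1 - ε) := by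
  calc δ ^ (1 - B * ε / 4) * X ^ (3 * (B * ε / 4))
      = δ ^ (1 - B * ε / 4) * X ^ (B * (3 * ε / 4)) := by ring_nf
    _ ≤ δ ^ (1 - B * ε / 4) * δ ^ (-(3 * ε / 4)) := by
        gcongr
        exact rpow_mul_le_rpow_neg hX hδ hδX (by positivity)
    _ = δ ^ (1 - B * ε / 4 - 3 * ε / 4) := by rw [← Real.rpow_add hδ, ← sub_eq_add_neg]
    _ ≤ δ ^ (1 - ε) := Real.rpow_le_rpow_of_exponent_ge hδ hδ₁ (by nlinarith)

lemma mul_rpow_neg_eq_rpow_one_sub (hδ : 0 < δ) : δ * δ ^ (-ε) = δ ^ (1 - ε) := by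
  rw [sub_eq_add_neg, Real.rpow_add hδ, Real.rpow_one]

lemma mul_log_two_mul_le (hX : 0 ≤ X) (hδ : 0 < δ) (hδX : δ ≤ X ^ (-B)) (hε : 0 < ε)
    (hB : 0 < B) (hεB : ε * B ≤ 1) :
    δ * Real.log (2 * X) ≤ 2 / (ε * B) * δ ^ (1 - ε) := by
  have htwo : (2 : ℝ) ^ (ε * B) ≤ 2 := Real.rpow_le_self_of_one_le one_le_two hεB
  have hpow : (2 * X) ^ (ε * B) ≤ 2 * δ ^ (-ε) := by
    rw [Real.mul_rpow zero_le_two hX]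
    gcongr
    rw [mul_comm]
    exact rpow_mul_le_rpow_neg hX hδ hδX hε.le
  calc δ * Real.log (2 * X) ≤ δ * ((2 * X) ^ (ε * B) / (ε * B)) := by
        gcongr
        exact Real.log_le_rpow_div (by positivity) (by positivity)
    _ ≤ δ * ((2 * δ ^ (-ε)) / (ε * B)) := by gcongr
    _ = 2 / (ε * B) * δ ^ (1 - ε) := by
        rw [← mul_rpow_neg_eq_rpow_one_sub hδ]
        ring

lemma mul_log_one_div_add_le {κ : ℝ} (hκ : 0 ≤ κ) (hδ : 0 < δ) (hδ₁ : δ ≤ 1) (hε : 0 < ε) :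
    δ * (Real.log (1 / δ) + κ) ≤ (1 / ε + κ) * δ ^ (1 - ε) := by
  have hlog : Real.log (1 / δ) ≤ δ ^ (-ε) / ε := by
    simpa only [one_div, Real.inv_rpow hδ.le, ← Real.rpow_neg hδ.le] using
      Real.log_le_rpow_div (by positivity : 0 ≤ 1 / δ) hε
  have hone : κ ≤ κ * δ ^ (-ε) := le_mul_of_one_le_right hκ
    (Real.one_le_rpow_of_pos_of_le_one_of_nonpos hδ hδ₁ (by linarith))
  calc δ * (Real.log (1 / δ) + κ) ≤ δ * (δ ^ (-ε) / ε + κ * δ ^ (-ε)) := by gcongr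
    _ = (1 / ε + κ) * δ ^ (1 - ε) := by
        rw [← mul_rpow_neg_eq_rpow_one_sub hδ]
        ring

end PowerComparison

section CutPoint

variable {B δ x X : ℝ}

/-- The point `Y` with `Y ^ (-B) = δ / 2`. For `x ≥ Y` an interval length `h ≥ δ * x / 2`
satisfies `h ≥ x ^ (1 - B)`, so that short-interval information is available. -/
noncomputable def cutPoint (B δ : ℝ) : ℝ := (δ / 2) ^ (-(1 / B))

lemma cutPoint_pos (B : ℝ) (hδ : 0 < δ) : 0 < cutPoint B δ := by
  unfold cutPoint
  positivity

lemma cutPoint_rpow_neg (hB : B ≠ 0) (hδ : 0 ≤ δ) : cutPoint B δ ^ (-B) = δ / 2 := by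
  rw [cutPoint, ← Real.rpow_mul (by positivity), neg_mul_neg, one_div_mul_cancel hB,
    Real.rpow_one]

lemma cutPoint_le (hB : 0 < B) (hX : 0 < X) (hδ : 2 * X ^ (-B) ≤ δ) : cutPoint B δ ≤ X := by
  calc cutPoint B δ ≤ (X ^ (-B)) ^ (-(1 / B)) :=
        Real.rpow_le_rpow_of_nonpos (by positivity) (by linarith) (by simp [hB.le])
    _ = X := by
        rw [← Real.rpow_mul hX.le, neg_mul_neg, mul_one_div_cancel hB.ne', Real.rpow_one]

lemma rpow_div_le_cutPoint {B₁ : ℝ} (hB : 0 < B) (hX : 0 ≤ X) (hδ : 0 < δ)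
    (hδX : δ ≤ X ^ (-B₁)) : X ^ (B₁ / B) ≤ cutPoint B δ := by
  calc X ^ (B₁ / B) = (X ^ (-B₁)) ^ (-(1 / B)) := by
        rw [← Real.rpow_mul hX, neg_mul_neg, mul_one_div]
    _ ≤ cutPoint B δ :=
        Real.rpow_le_rpow_of_nonpos (by positivity) (by linarith) (by simp [hB.le])

lemma cutPoint_sq (hB : B ≠ 0) (hX : 0 < X) (hδ : 0 < δ) :
    cutPoint B δ ^ 2 = 2 ^ (2 / B) * (X ^ 2 * (δ * X ^ B) ^ (-(2 / B))) := by
  have hX_cancel : X ^ 2 * X ^ (-2 : ℝ) = 1 := by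
    rw [← Real.rpow_natCast X 2, ← Real.rpow_add hX]
    norm_num
  rw [Real.mul_rpow hδ.le (by positivity), ← Real.rpow_mul hX.le,
    show B * -(2 / B) = -2 by field_simp, cutPoint, ← Real.rpow_natCast,
    ← Real.rpow_mul (by positivity),
    show -(1 / B) * ((2 : ℕ) : ℝ) = -(2 / B) by push_cast; ring,
    Real.div_rpow hδ.le zero_le_two, Real.rpow_neg zero_le_two, div_inv_eq_mul]
  linear_combination (-(2 ^ (2 / B) * δ ^ (-(2 / B)))) * hX_cancel

lemma cutPoint_sq_le (hB : 0 < B) (hX : 0 < X) (hδ : X ^ (-B) ≤ δ) :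
    cutPoint B δ ^ 2 ≤ 2 ^ (2 / B) * (X ^ 2 * (δ * X ^ B) ^ (-(2 / (3 * B)))) := by
  have hδ₀ : 0 < δ := (by positivity : 0 < X ^ (-B)).trans_le hδ
  have hone : 1 ≤ δ * X ^ B := by
    calc (1 : ℝ) = X ^ (-B) * X ^ B := by rw [← Real.rpow_add hX, neg_add_cancel, Real.rpow_zero]
      _ ≤ δ * X ^ B := by gcongr
  rw [cutPoint_sq hB.ne' hX hδ₀]
  gcongr
  linarith

lemma rpow_one_sub_le_of_cutPoint_le (hB : 0 < B) (hδ : 0 < δ) (hx : cutPoint B δ ≤ x) :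
    x ^ (1 - B) ≤ δ / 2 * x := by
  have hx₀ : 0 < x := (cutPoint_pos B hδ).trans_le hx
  rw [show 1 - B = -B + 1 by ring, Real.rpow_add hx₀, Real.rpow_one]
  gcongr
  rw [← cutPoint_rpow_neg hB.ne' hδ.le]
  exact Real.rpow_le_rpow_of_nonpos (cutPoint_pos B hδ) hx (by linarith)

lemma mul_le_rpow_one_sub (hB : 0 ≤ B) (hx : 0 < x) (hxX : x ≤ X) (hδX : δ ≤ X ^ (-B)) :
    δ * x ≤ x ^ (1 - B) := by
  rw [show 1 - B = -B + 1 by ring, Real.rpow_add hx, Real.rpow_one]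
  gcongr
  exact hδX.trans (Real.rpow_le_rpow_of_nonpos hx hxX (by linarith))

end CutPoint

section VarianceTransfer

open Filter

variable {B₁ B₂ B₃ C K D c δ ε X Y : ℝ}

lemma integral_psiIncrementError_mul_sq_sub_eq (K : ℝ) (hY : 1 ≤ Y) (hYX : Y ≤ X)
    (hδ : 0 ≤ δ) :
    (∫ x in (1 : ℝ)..X, psiIncrementError x (δ * x) ^ 2) -
        1 / 2 * δ * X ^ 2 * (Real.log (1 / δ) + (1 - K)) =
      ((∫ x in (1 : ℝ)..Y, psiIncrementError x (δ * x) ^ 2) -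
        1 / 2 * δ * Y ^ 2 * (Real.log (1 / δ) + (1 - K))) + relPsiVarianceDefect K Y X δ := by
  rw [relPsiVarianceDefect, ← intervalIntegral.integral_add_adjacent_intervals
    (intervalIntegrable_psiIncrementError_mul_sq zero_le_one hY hδ)
    (intervalIntegrable_psiIncrementError_mul_sq (by linarith) hYX hδ)]
  ring

lemma SaffariVaughanBound.integral_le_mul_sq (hSV : SaffariVaughanBound C (B₁ * ε / 4))
    (hB₁ : 0 ≤ B₁) (hB₁' : B₁ ≤ 1) (hε : 0 ≤ ε) (hY : 1 ≤ Y) (hYX : Y ≤ X) (hδ : 0 < δ)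
    (hδ₁ : δ ≤ 1) (hδX : δ ≤ X ^ (-B₁)) :
    ∫ x in (1 : ℝ)..Y, psiIncrementError x (δ * x) ^ 2 ≤ C * (Y ^ 2 * δ ^ (1 - ε)) := by
  have hC := hSV.nonneg
  have hX₀ : 0 ≤ X := by linarith
  set e := B₁ * ε / 4
  have he : 0 ≤ e := by positivity
  have hpow : Y ^ (2 + 2 * e) ≤ Y ^ 2 * X ^ (3 * e) := by
    rw [Real.rpow_add (by linarith), Real.rpow_two]
    gcongr
    calc Y ^ (2 * e) ≤ X ^ (2 * e) := by gcongr
      _ ≤ X ^ (3 * e) := Real.rpow_le_rpow_of_exponent_le (hY.trans hYX) (by linarith)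
  calc _ ≤ C * Y ^ (2 + 2 * e) * δ ^ (1 - e) := hSV Y δ hY hδ hδ₁
    _ ≤ C * (Y ^ 2 * X ^ (3 * e)) * δ ^ (1 - e) := by gcongr
    _ = C * (Y ^ 2 * (δ ^ (1 - e) * X ^ (3 * e))) := by ring
    _ ≤ C * (Y ^ 2 * δ ^ (1 - ε)) := by
        gcongr
        exact rpow_mul_rpow_le_rpow_one_sub hX₀ hδ hδ₁ hδX hB₁' hε

lemma abs_half_mul_sq_mul_log_one_div_add_le (κ Y : ℝ) (hδ : 0 < δ) (hδ₁ : δ ≤ 1)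
    (hε : 0 < ε) :
    |1 / 2 * δ * Y ^ 2 * (Real.log (1 / δ) + κ)| ≤
      (1 / ε + (|κ| + 1)) * (Y ^ 2 * δ ^ (1 - ε)) := by
  have hlog : 0 ≤ Real.log (1 / δ) := Real.log_nonneg (by rwa [le_div_iff₀ hδ, one_mul])
  have habs : |Real.log (1 / δ) + κ| ≤ Real.log (1 / δ) + (|κ| + 1) := by
    linarith [abs_add_le (Real.log (1 / δ)) κ, abs_of_nonneg hlog]
  calc _ = 1 / 2 * Y ^ 2 * (δ * |Real.log (1 / δ) + κ|) := by
        rw [abs_mul, abs_of_nonneg (by positivity)]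
        ring
    _ ≤ 1 / 2 * Y ^ 2 * ((1 / ε + (|κ| + 1)) * δ ^ (1 - ε)) := by
        refine mul_le_mul_of_nonneg_left (le_trans (by gcongr)
          (mul_log_one_div_add_le (by positivity : 0 ≤ |κ| + 1) hδ hδ₁ hε)) (by positivity)
    _ ≤ Y ^ 2 * ((1 / ε + (|κ| + 1)) * δ ^ (1 - ε)) := by
        gcongr
        linarith [sq_nonneg Y]
    _ = _ := by ring

lemma rpow_mul_rpow_mul_rpow_le (hB₁ : 0 ≤ B₁) (hB₁' : B₁ ≤ 1) (hε : 0 ≤ ε) (hc : c ≤ 2)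
    (hX : 1 ≤ X) (hδ : 0 < δ) (hδ₁ : δ ≤ 1) (hδX : δ ≤ X ^ (-B₁)) :
    X ^ (2 + 2 * (B₁ * ε / 4)) * δ ^ (1 - B₁ * ε / 4) *
        (X ^ (-(2 * c / 3))) ^ ((1 - B₁ * ε / 4) / 2) ≤
      δ ^ (1 - ε) * X ^ (2 - c / 3) := by
  have hX₀ : 0 < X := by linarith
  have hδ_pow := rpow_mul_rpow_le_rpow_one_sub hX₀.le hδ hδ₁ hδX hB₁' hε
  have he : 0 ≤ B₁ * ε / 4 := by positivity
  set e := B₁ * ε / 4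
  have hX_pow : X ^ (2 + 2 * e) * (X ^ (-(2 * c / 3))) ^ ((1 - e) / 2) ≤
      X ^ (3 * e) * X ^ (2 - c / 3) := by
    rw [← Real.rpow_mul hX₀.le, ← Real.rpow_add hX₀, ← Real.rpow_add hX₀]
    exact Real.rpow_le_rpow_of_exponent_le hX (by nlinarith)
  calc _ = δ ^ (1 - e) * (X ^ (2 + 2 * e) * (X ^ (-(2 * c / 3))) ^ ((1 - e) / 2)) := by ring
    _ ≤ δ ^ (1 - e) * (X ^ (3 * e) * X ^ (2 - c / 3)) := by gcongr
    _ = δ ^ (1 - e) * X ^ (3 * e) * X ^ (2 - c / 3) := by ring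
    _ ≤ δ ^ (1 - ε) * X ^ (2 - c / 3) := by gcongr

/-- The choice `η = X ^ (-2c/3)` balances the loss `1 / η` of the averaging against the gain
`η ^ (1/2)` of the Saffari–Vaughan bound. -/
lemma abs_relPsiVarianceDefect_le_rpow (hSV : SaffariVaughanBound C (B₁ * ε / 4))
    (hB₁ : 0 < B₁) (hB₁' : B₁ ≤ 1) (hε : 0 < ε) (hε₁ : ε ≤ 1) (hc : 0 ≤ c) (hc₂ : c ≤ 2)
    (hD : 0 ≤ D) (hY : 1 ≤ Y) (hYX : Y ≤ X) (hδ : 0 < δ) (hδX : δ ≤ X ^ (-B₁))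
    (hXc : X ^ (-(2 * c / 3)) ≤ 1 / 2)
    (hdefect : ∀ x h, Y ≤ x → x ≤ X → δ / 2 * x ≤ h → h ≤ δ * x →
      |psiVarianceDefect K x h| ≤ D * h * x ^ (1 - c)) :
    |relPsiVarianceDefect K Y X δ| ≤
      (2 * D * (2 / (ε * B₁)) + 17 * C + (1 / ε + (|1 - K| + 1))) *
        (δ ^ (1 - ε) * X ^ (2 - c / 3)) := by
  have hC := hSV.nonneg
  have hX : 1 ≤ X := hY.trans hYX
  have hX₀ : 0 < X := by linarith
  have hδ₁ : δ ≤ 1 := hδX.trans (Real.rpow_le_one_of_one_le_of_nonpos hX (by linarith))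
  have hincrement := rpow_mul_rpow_mul_rpow_le hB₁.le hB₁' hε.le hc₂ hX hδ hδ₁ hδX
  set η := X ^ (-(2 * c / 3)) with hη_def
  have hη : 0 < η := by positivity
  have haverage : X ^ (2 - c) / η = X ^ (2 - c / 3) := by
    rw [hη_def, ← Real.rpow_sub hX₀]
    ring_nf
  have hmain : X ^ 2 * η ≤ X ^ (2 - c / 3) := by
    rw [hη_def, ← Real.rpow_two, ← Real.rpow_add hX₀]
    exact Real.rpow_le_rpow_of_exponent_le hX (by linarith)
  have hlogX := mul_log_two_mul_le hX₀.le hδ hδX hε hB₁ (by nlinarith)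
  have hlogδ := mul_log_one_div_add_le (by positivity : 0 ≤ |1 - K| + 1) hδ hδ₁ hε
  refine (abs_relPsiVarianceDefect_le hSV (by nlinarith) hD hc₂ hY hYX hδ hδ₁ hη hXc
    fun x h hYx hxX hxh hhx ↦ hdefect x h hYx hxX (le_trans ?_ hxh) hhx).trans ?_
  · exact mul_le_mul_of_nonneg_right (by nlinarith) (by linarith)
  calc _ = 2 * D * (δ * Real.log (2 * X)) * (X ^ (2 - c) / η) +
          17 * C * (X ^ (2 + 2 * (B₁ * ε / 4)) * δ ^ (1 - B₁ * ε / 4) *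
            η ^ ((1 - B₁ * ε / 4) / 2)) +
          δ * (Real.log (1 / δ) + (|1 - K| + 1)) * (X ^ 2 * η) := by ring
    _ ≤ 2 * D * (2 / (ε * B₁) * δ ^ (1 - ε)) * X ^ (2 - c / 3) +
          17 * C * (δ ^ (1 - ε) * X ^ (2 - c / 3)) +
          (1 / ε + (|1 - K| + 1)) * δ ^ (1 - ε) * X ^ (2 - c / 3) := by
        rw [haverage]
        gcongr
    _ = _ := by ring

/-- The error term of the transfer theorem: the first summand comes from the short-interval
hypothesis, the second from the range below `cutPoint B δ`. -/
noncomputable def transferError (B c ε X δ : ℝ) : ℝ :=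
  δ ^ (1 - ε) * X ^ (2 - c / 3) + δ ^ (1 - ε) * X ^ 2 * (δ * X ^ B) ^ (-(2 / (3 * B)))

lemma cutPoint_sq_mul_rpow_le_transferError (c ε : ℝ) (hB₃ : 0 < B₃) (hX : 0 < X)
    (hδ : X ^ (-B₃) ≤ δ) :
    cutPoint B₃ δ ^ 2 * δ ^ (1 - ε) ≤ 2 ^ (2 / B₃) * transferError B₃ c ε X δ := by
  have hδ₀ : 0 < δ := (by positivity : 0 < X ^ (-B₃)).trans_le hδ
  calc cutPoint B₃ δ ^ 2 * δ ^ (1 - ε)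
      ≤ 2 ^ (2 / B₃) * (X ^ 2 * (δ * X ^ B₃) ^ (-(2 / (3 * B₃)))) * δ ^ (1 - ε) := by
        gcongr
        exact cutPoint_sq_le hB₃ hX hδ
    _ = 2 ^ (2 / B₃) * (δ ^ (1 - ε) * X ^ 2 * (δ * X ^ B₃) ^ (-(2 / (3 * B₃)))) := by ring
    _ ≤ 2 ^ (2 / B₃) * transferError B₃ c ε X δ := by
        unfold transferError
        gcongr
        exact le_add_of_nonneg_left (by positivity)

lemma transferError_min_le (hB₃ : 0 < B₃) (hX : 1 ≤ X) (hδ : 0 < δ) (hδ₁ : δ ≤ 1) :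
    transferError B₃ (min c 2) (min ε 1) X δ ≤ 2 * transferError B₃ c ε X δ := by
  have hX₀ : 0 < X := by linarith
  have hδ_pow : δ ^ (1 - min ε 1) ≤ δ ^ (1 - ε) :=
    Real.rpow_le_rpow_of_exponent_ge hδ hδ₁ (by linarith [min_le_left ε 1])
  set w := δ * X ^ B₃ with hw_def
  have hw : 0 < w := by positivity
  have hX_pow : X ^ (2 - min c 2 / 3) ≤ X ^ (2 - c / 3) + X ^ 2 * w ^ (-(2 / (3 * B₃))) := by
    rcases le_total c 2 with hc | hc
    · rw [min_eq_left hc]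
      exact le_add_of_nonneg_right (by positivity)
    · rw [min_eq_right hc]
      refine le_add_of_nonneg_of_le (by positivity) ?_
      calc X ^ ((2 : ℝ) - 2 / 3) = X ^ 2 * (X ^ B₃) ^ (-(2 / (3 * B₃))) := by
            rw [← Real.rpow_mul hX₀.le, ← Real.rpow_two, ← Real.rpow_add hX₀]
            field_simp
            ring_nf
        _ ≤ X ^ 2 * w ^ (-(2 / (3 * B₃))) := by
            refine mul_le_mul_of_nonneg_left (Real.rpow_le_rpow_of_nonpos hw ?_ ?_) (by positivity)
            · exact mul_le_of_le_one_left (by positivity) hδ₁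
            · exact neg_nonpos.mpr (by positivity)
  calc transferError B₃ (min c 2) (min ε 1) X δ
      ≤ δ ^ (1 - ε) * (X ^ (2 - c / 3) + X ^ 2 * w ^ (-(2 / (3 * B₃)))) +
          δ ^ (1 - ε) * X ^ 2 * w ^ (-(2 / (3 * B₃))) := by
        unfold transferError
        gcongr
    _ ≤ 2 * transferError B₃ c ε X δ := by
        have : 0 ≤ δ ^ (1 - ε) * X ^ (2 - c / 3) := by positivity
        rw [transferError, ← hw_def]
        linarith

lemma abs_integral_psiIncrementError_mul_sq_sub_le_transferError {x₀ : ℝ}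
    (hSV : SaffariVaughanBound C (B₁ * ε / 4)) (hB₁ : 0 < B₁) (hB₁' : B₁ ≤ 1) (hB₃ : 0 < B₃)
    (hε : 0 < ε) (hε₁ : ε ≤ 1) (hc : 0 ≤ c) (hc₂ : c ≤ 2) (hD : 0 ≤ D) (hx₀ : 1 ≤ x₀)
    (hdefect : ∀ x, x₀ ≤ x → ∀ h, x ^ (1 - B₃) ≤ h → h ≤ x ^ (1 - B₁) →
      |psiVarianceDefect K x h| ≤ D * h * x ^ (1 - c))
    (hX : 1 ≤ X) (hXc : X ^ (-(2 * c / 3)) ≤ 1 / 2) (hXx₀ : x₀ ≤ X ^ (B₁ / B₃))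
    (hδ : 2 * X ^ (-B₃) ≤ δ) (hδX : δ ≤ X ^ (-B₁)) :
    |(∫ x in (1 : ℝ)..X, psiIncrementError x (δ * x) ^ 2) -
        1 / 2 * δ * X ^ 2 * (Real.log (1 / δ) + (1 - K))| ≤
      ((C + (1 / ε + (|1 - K| + 1))) * 2 ^ (2 / B₃) +
        (2 * D * (2 / (ε * B₁)) + 17 * C + (1 / ε + (|1 - K| + 1)))) *
        transferError B₃ c ε X δ := by
  have hC := hSV.nonneg
  have hX₀ : 0 < X := by linarith
  have hX_pow : 0 < X ^ (-B₃) := by positivity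
  have hδ₀ : 0 < δ := by linarith
  have hδ₁ : δ ≤ 1 := hδX.trans (Real.rpow_le_one_of_one_le_of_nonpos hX (by linarith))
  set Y := cutPoint B₃ δ
  have hx₀Y : x₀ ≤ Y := hXx₀.trans (rpow_div_le_cutPoint hB₃ hX₀.le hδ₀ hδX)
  have hY : 1 ≤ Y := hx₀.trans hx₀Y
  have hYX : Y ≤ X := cutPoint_le hB₃ hX₀ hδ
  have hinitial : |(∫ x in (1 : ℝ)..Y, psiIncrementError x (δ * x) ^ 2) -
      1 / 2 * δ * Y ^ 2 * (Real.log (1 / δ) + (1 - K))| ≤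
      (C + (1 / ε + (|1 - K| + 1))) * (2 ^ (2 / B₃) * transferError B₃ c ε X δ) := by
    refine (abs_sub _ _).trans (le_trans ?_ (mul_le_mul_of_nonneg_left
      (cutPoint_sq_mul_rpow_le_transferError c ε hB₃ hX₀ (by linarith)) (by positivity)))
    rw [add_mul, abs_of_nonneg (intervalIntegral.integral_nonneg hY fun _ _ ↦ sq_nonneg _)]
    exact add_le_add (hSV.integral_le_mul_sq hB₁.le hB₁' hε.le hY hYX hδ₀ hδ₁ hδX)
      (abs_half_mul_sq_mul_log_one_div_add_le _ _ hδ₀ hδ₁ hε)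
  have hmain := abs_relPsiVarianceDefect_le_rpow hSV hB₁ hB₁' hε hε₁ hc hc₂ hD hY hYX hδ₀ hδX hXc
    fun x h hYx hxX hxh hhx ↦ hdefect x (hx₀Y.trans hYx) h
      ((rpow_one_sub_le_of_cutPoint_le hB₃ hδ₀ hYx).trans hxh)
      (hhx.trans (mul_le_rpow_one_sub hB₁.le (by linarith) hxX hδX))
  have hsummand : δ ^ (1 - ε) * X ^ (2 - c / 3) ≤ transferError B₃ c ε X δ :=
    le_add_of_nonneg_right (by positivity)
  rw [integral_psiIncrementError_mul_sq_sub_eq K hY hYX hδ₀.le, add_mul, mul_assoc (C + _)]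
  exact (abs_add_le _ _).trans (add_le_add hinitial (hmain.trans (by gcongr)))

lemma exists_abs_integral_psiIncrementError_mul_sq_sub_le_of_le (hRH : RiemannHypothesis)
    (hB₁ : 0 < B₁) (hB₁' : B₁ ≤ 1) (hB₂₃ : B₂ < B₃) (hB₃ : 0 < B₃) (hc : 0 < c) (hc₂ : c ≤ 2)
    (hD : 0 ≤ D) (hε : 0 < ε) (hε₁ : ε ≤ 1)
    (hdefect : ∀ᶠ x in atTop, ∀ h, x ^ (1 - B₃) ≤ h → h ≤ x ^ (1 - B₁) →
      |psiVarianceDefect K x h| ≤ D * h * x ^ (1 - c)) :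
    ∃ C, 0 < C ∧ ∀ᶠ X in atTop, ∀ δ, X ^ (-B₂) ≤ δ → δ ≤ X ^ (-B₁) →
      |(∫ x in (1 : ℝ)..X, psiIncrementError x (δ * x) ^ 2) -
          1 / 2 * δ * X ^ 2 * (Real.log (1 / δ) + (1 - K))| ≤
        C * transferError B₃ c ε X δ := by
  obtain ⟨C, hC, hSV⟩ := exists_saffariVaughanBound hRH (ε := B₁ * ε / 4) (by positivity)
    (by nlinarith)
  obtain ⟨x₀, hx₀⟩ := eventually_atTop.mp hdefect
  refine ⟨(C + (1 / ε + (|1 - K| + 1))) * 2 ^ (2 / B₃) +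
    (2 * D * (2 / (ε * B₁)) + 17 * C + (1 / ε + (|1 - K| + 1))), by positivity, ?_⟩
  filter_upwards [eventually_ge_atTop 1,
    (tendsto_rpow_neg_atTop (by positivity : 0 < 2 * c / 3)).eventually_le_const one_half_pos,
    (tendsto_rpow_atTop (by positivity : 0 < B₁ / B₃)).eventually_ge_atTop (max x₀ 1),
    (tendsto_rpow_atTop (sub_pos.mpr hB₂₃)).eventually_ge_atTop 2]
    with X hX hXc hXx₀ htwo δ hδ hδX
  have hδ_lower : 2 * X ^ (-B₃) ≤ δ := by
    calc 2 * X ^ (-B₃) ≤ X ^ (B₃ - B₂) * X ^ (-B₃) := by gcongr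
      _ = X ^ (-B₂) := by
          rw [← Real.rpow_add (by linarith)]
          ring_nf
      _ ≤ δ := hδ
  exact abs_integral_psiIncrementError_mul_sq_sub_le_transferError hSV hB₁ hB₁' hB₃ hε hε₁ hc.le
    hc₂ hD (le_max_right _ _) (fun x hx ↦ hx₀ x ((le_max_left _ _).trans hx)) hX hXc hXx₀
    hδ_lower hδX

theorem exists_abs_integral_psiIncrementError_mul_sq_sub_le (hRH : RiemannHypothesis)
    (hB₁ : 0 < B₁) (hB₁' : B₁ ≤ 1) (hB₂₃ : B₂ < B₃) (hB₃ : 0 < B₃) (hc : 0 < c) (hε : 0 < ε)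
    (hdefect : ∀ᶠ x in atTop, ∀ h, x ^ (1 - B₃) ≤ h → h ≤ x ^ (1 - B₁) →
      |psiVarianceDefect K x h| ≤ D * h * x ^ (1 - c)) :
    ∃ C, 0 < C ∧ ∀ᶠ X in atTop, ∀ δ, X ^ (-B₂) ≤ δ → δ ≤ X ^ (-B₁) →
      |(∫ x in (1 : ℝ)..X, psiIncrementError x (δ * x) ^ 2) -
          1 / 2 * δ * X ^ 2 * (Real.log (1 / δ) + (1 - K))| ≤
        C * transferError B₃ c ε X δ := by
  have hdefect_min : ∀ᶠ x in atTop, ∀ h, x ^ (1 - B₃) ≤ h → h ≤ x ^ (1 - B₁) →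
      |psiVarianceDefect K x h| ≤ |D| * h * x ^ (1 - min c 2) := by
    filter_upwards [hdefect, eventually_ge_atTop 1] with x hx hx₁ h hxh hhx
    have hh : 0 ≤ h := (by positivity : 0 ≤ x ^ (1 - B₃)).trans hxh
    refine (hx h hxh hhx).trans ?_
    gcongr
    · exact le_abs_self D
    · exact min_le_left c 2
  obtain ⟨C, hC, hbound⟩ := exists_abs_integral_psiIncrementError_mul_sq_sub_le_of_le hRH hB₁ hB₁'
    hB₂₃ hB₃ (lt_min hc two_pos) (min_le_right c 2) (abs_nonneg D) (lt_min hε one_pos)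
    (min_le_right ε 1) hdefect_min
  refine ⟨C * 2, by positivity, ?_⟩
  filter_upwards [hbound, eventually_ge_atTop 1] with X hX hX₁ δ hδ hδX
  have hδ₀ : 0 < δ := (by positivity : 0 < X ^ (-B₂)).trans_le hδ
  have hδ₁ : δ ≤ 1 := hδX.trans (Real.rpow_le_one_of_one_le_of_nonpos hX₁ (by linarith))
  calc _ ≤ C * transferError B₃ (min c 2) (min ε 1) X δ := hX δ hδ hδX
    _ ≤ C * (2 * transferError B₃ c ε X δ) := by
        gcongr
        exact transferError_min_le hB₃ hX₁ hδ₀ hδ₁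
    _ = C * 2 * transferError B₃ c ε X δ := by ring

end VarianceTransfer

lemma chebyshevPsi_eq_psi (x : ℝ) : chebyshevPsi x = Chebyshev.psi x := by
  rw [Chebyshev.psi_eq_sum_Icc, chebyshevPsi, Finset.range_eq_Ico]
  rfl

lemma zetaVarDelta_eq_integral (X δ : ℝ) :
    zetaVarDelta X δ = ∫ x in (1 : ℝ)..X, psiIncrementError x (δ * x) ^ 2 := by
  simp only [zetaVarDelta, chebyshevPsi_eq_psi, psiIncrementError]

lemma zetaVarH_sub_eq_psiVarianceDefect (K X h : ℝ) :
    zetaVarH X h - h * X * (Real.log (X / h) - K) = psiVarianceDefect K X h := by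
  simp only [zetaVarH, chebyshevPsi_eq_psi, psiIncrementError, psiVarianceDefect]

/-- **Theorem D1 for the Riemann zeta function.** An asymptotic for `Ṽ(X,h)` with power
saving implies an asymptotic for `V(X,δ)`. -/
theorem theoremD1_zeta (hRH : RiemannHypothesis)
    (B₁ B₂ B₃ c : ℝ) (hB₁ : 0 < B₁) (hB₁₂ : B₁ ≤ B₂) (hB₂₃ : B₂ < B₃) (hB₃ : B₃ < 1)
    (hc : 0 < c) (D X₀ : ℝ)
    (hVt : ∀ X : ℝ, X₀ ≤ X → ∀ h : ℝ, X ^ (1 - B₃) ≤ h → h ≤ X ^ (1 - B₁) →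
      |zetaVarH X h - h * X *
          (Real.log (X / h) - Real.eulerMascheroniConstant - Real.log (2 * π))|
        ≤ D * h * X ^ (1 - c)) :
    ∀ ε : ℝ, 0 < ε → ∃ C : ℝ, 0 < C ∧ ∃ X₁ : ℝ, ∀ X : ℝ, X₁ ≤ X →
      ∀ δ : ℝ, X ^ (-B₂) ≤ δ → δ ≤ X ^ (-B₁) →
        |zetaVarDelta X δ - 1 / 2 * δ * X ^ 2 *
            (Real.log (1 / δ) + 1 - Real.eulerMascheroniConstant - Real.log (2 * π))|
          ≤ C * (δ ^ (1 - ε) * X ^ (2 - c / 3) +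
              δ ^ (1 - ε) * X ^ 2 * (δ * X ^ B₃) ^ (-(2 / (3 * B₃)))) := by
  intro ε hε
  have hdefect : ∀ᶠ x in Filter.atTop, ∀ h, x ^ (1 - B₃) ≤ h → h ≤ x ^ (1 - B₁) →
      |psiVarianceDefect (Real.eulerMascheroniConstant + Real.log (2 * π)) x h| ≤
        D * h * x ^ (1 - c) := by
    filter_upwards [Filter.eventually_ge_atTop X₀] with x hx h hxh hhx
    rw [← zetaVarH_sub_eq_psiVarianceDefect, ← sub_sub]
    exact hVt x hx h hxh hhx
  obtain ⟨C, hC, hbound⟩ := exists_abs_integral_psiIncrementError_mul_sq_sub_le hRH hB₁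
    (by linarith) hB₂₃ (by linarith) hc hε hdefect
  obtain ⟨X₁, hX₁⟩ := Filter.eventually_atTop.mp hbound
  refine ⟨C, hC, X₁, fun X hX δ hδ hδX ↦ ?_⟩
  rw [zetaVarDelta_eq_integral, sub_sub, add_sub_assoc]
  exact hX₁ X hX δ hδ hδX
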